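/- arXiv:2206.15368 — 4 statements merged into one kernel-verified Lean document; each statement's English description precedes it below -/
import Mathlib

section
/- There exists a constant K_d > 0 depending only on the dimension d such that the following holds: for every countable family {u_n}_{n≥1} of continuously differentiable functions from ℝ^d to ℂ that is orthonormal in L²(ℝ^d), and every sequence of coefficients λ_n with 0 ≤ λ_n ≤ 1 for all n, one has Σ_n λ_n ∫_{ℝ^d} |∇u_n(x)|² dx ≥ K_d ∫_{ℝ^d} ρ(x)^{1+2/d} dx, where ρ(x) = Σ_n λ_n |u_n(x)|². -/
open MeasureTheory ENNReal
open scoped BigOperators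

/-- `|∇f(x)|² = Σᵢ |∂ᵢ f(x)|²` for a function `f : ℝ^d → ℂ`. -/
noncomputable def gradSq {d : ℕ} (f : EuclideanSpace ℝ (Fin d) → ℂ)
    (x : EuclideanSpace ℝ (Fin d)) : ℝ :=
  ∑ i : Fin d, ‖fderiv ℝ f x (EuclideanSpace.single i 1)‖ ^ 2

/-!
Averaging `u x - u y` over `y ∈ B(x, r)` along segments gives `|u x| ≤ r M|∇u| x + |⨍_{B(x, r)} u|`,
where `M` is the maximal operator. For an orthonormal family, Bessel's inequality applied to the
indicator of the ball bounds the sum of the squared averages by `1 / |B(x, r)|`, and therefore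
`ρ x ≤ 2 (r² ∑ₙ λₙ (M|∇uₙ| x)² + |B(x, r)|⁻¹)` for every `r > 0`. Optimizing in `r` separately at
each `x` gives the pointwise bound `ρ x ^ (1 + 2/d) ≤ C ∑ₙ λₙ (M|∇uₙ| x)²`, which is integrated with
the Hardy–Littlewood maximal inequality in `L²`.
-/

open scoped NNReal
open Metric Module Set TopologicalSpace

section LayerCake

lemma lintegral_Ioi_ofReal_rpow_eq_top (s : ℝ) :
    ∫⁻ t in Ioi (0 : ℝ), ENNReal.ofReal (t ^ s) = ∞ := by
  by_contra h
  refine not_integrableOn_Ioi_rpow s ((lintegral_ofReal_ne_top_iff_integrable ?_ ?_).1 h)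
  · exact (measurable_id.pow_const s).aestronglyMeasurable
  · filter_upwards [ae_restrict_mem measurableSet_Ioi] with t ht
    exact Real.rpow_nonneg (mem_Ioi.1 ht).le s

variable {α : Type*} [MeasurableSpace α]

theorem lintegral_rpow_eq_lintegral_meas_ofReal_lt_mul (μ : Measure α) {f : α → ℝ≥0∞}
    (hf : AEMeasurable f μ) {p : ℝ} (hp : 0 < p) :
    ∫⁻ x, f x ^ p ∂μ = ENNReal.ofReal p *
      ∫⁻ t in Ioi (0 : ℝ), μ {x | ENNReal.ofReal t < f x} * ENNReal.ofReal (t ^ (p - 1)) := by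
  by_cases hfin : ∀ᵐ x ∂μ, f x ≠ ∞
  · calc ∫⁻ x, f x ^ p ∂μ = ∫⁻ x, ENNReal.ofReal ((f x).toReal ^ p) ∂μ := by
          refine lintegral_congr_ae ?_
          filter_upwards [hfin] with x hx
          rw [ENNReal.toReal_rpow, ENNReal.ofReal_toReal (rpow_ne_top_of_nonneg hp.le hx)]
      _ = ENNReal.ofReal p *
            ∫⁻ t in Ioi (0 : ℝ), μ {x | t < (f x).toReal} * ENNReal.ofReal (t ^ (p - 1)) :=
          lintegral_rpow_eq_lintegral_meas_lt_mul μ (.of_forall fun _ => toReal_nonneg)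
            hf.ennreal_toReal hp
      _ = _ := by
          congr 1
          refine setLIntegral_congr_fun measurableSet_Ioi fun t ht => ?_
          congr 1
          refine measure_congr ?_
          filter_upwards [hfin] with x hx
          exact propext (ofReal_lt_iff_lt_toReal (mem_Ioi.1 ht).le hx).symm
  · have hpos : μ {x | f x = ∞} ≠ 0 := by simpa [ae_iff] using hfin
    have hleft : ∫⁻ x, f x ^ p ∂μ = ∞ := by
      by_contra h
      refine hfin ((ae_lt_top' (hf.pow_const p) h).mono fun x hx hx' => ?_)
      simp [hx', hp] at hx
    have hright : ∫⁻ t in Ioi (0 : ℝ),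
        μ {x | ENNReal.ofReal t < f x} * ENNReal.ofReal (t ^ (p - 1)) = ∞ := by
      refine top_unique ?_
      calc ∞ = μ {x | f x = ∞} * ∫⁻ t in Ioi (0 : ℝ), ENNReal.ofReal (t ^ (p - 1)) := by
            rw [lintegral_Ioi_ofReal_rpow_eq_top, mul_top hpos]
        _ ≤ ∫⁻ t in Ioi (0 : ℝ), μ {x | f x = ∞} * ENNReal.ofReal (t ^ (p - 1)) :=
            lintegral_const_mul_le _ _
        _ ≤ _ := by
            gcongr with t
            exact fun hx => hx.symm ▸ ofReal_lt_top
    rw [hleft, hright, mul_top (ofReal_pos.2 hp).ne']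

lemma lintegral_mul_rpow_withDensity_self {μ : Measure α} {f : α → ℝ≥0∞}
    (hf : AEMeasurable f μ) (c : ℝ≥0∞) {q : ℝ} (hq : 0 ≤ q) :
    ∫⁻ x, (c * f x) ^ q ∂μ.withDensity f = c ^ q * ∫⁻ x, f x ^ (q + 1) ∂μ := by
  rw [lintegral_withDensity_eq_lintegral_mul₀ hf ((hf.const_mul c).pow_const q),
    ← lintegral_const_mul'' _ (hf.pow_const _)]
  refine lintegral_congr fun x => ?_
  rw [Pi.mul_apply, ENNReal.mul_rpow_of_nonneg _ _ hq,
    ENNReal.rpow_add_of_nonneg _ _ hq zero_le_one, ENNReal.rpow_one]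
  ring

end LayerCake

section MaximalFunction

variable {X : Type*} [PseudoMetricSpace X] [MeasurableSpace X]

/-- The centred Hardy–Littlewood maximal function of a nonnegative function, with averages taken
over open balls of all positive radii. -/
noncomputable def hardyLittlewoodMaximal (μ : Measure X) (f : X → ℝ≥0∞) (x : X) : ℝ≥0∞ :=
  ⨆ (r : ℝ) (_ : 0 < r), ⨍⁻ y in ball x r, f y ∂μ

lemma setLAverage_ball_le_hardyLittlewoodMaximal (μ : Measure X) (f : X → ℝ≥0∞) (x : X) {r : ℝ}
    (hr : 0 < r) : ⨍⁻ y in ball x r, f y ∂μ ≤ hardyLittlewoodMaximal μ f x :=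
  le_iSup₂_of_le r hr le_rfl

lemma hardyLittlewoodMaximal_le_add_const (μ : Measure X) {f g : X → ℝ≥0∞} {c : ℝ≥0∞}
    (h : ∀ y, f y ≤ g y + c) (x : X) :
    hardyLittlewoodMaximal μ f x ≤ hardyLittlewoodMaximal μ g x + c := by
  refine iSup₂_le fun r hr => ?_
  calc ⨍⁻ y in ball x r, f y ∂μ ≤ ⨍⁻ y in ball x r, (g y + c) ∂μ := lintegral_mono h
    _ = ⨍⁻ y in ball x r, g y ∂μ + c * (μ (ball x r) / μ (ball x r)) := by
        rw [laverage, lintegral_add_right _ measurable_const, lintegral_const]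
        simp [laverage, ENNReal.div_eq_inv_mul]
    _ ≤ hardyLittlewoodMaximal μ g x + c := by
        gcongr
        · exact setLAverage_ball_le_hardyLittlewoodMaximal μ g x hr
        · exact mul_le_of_le_one_right' ENNReal.div_self_le_one

lemma lowerSemicontinuous_setLIntegral_ball (μ : Measure X) (f : X → ℝ≥0∞) (r : ℝ) :
    LowerSemicontinuous fun x => ∫⁻ y in ball x r, f y ∂μ := by
  intro x a ha
  obtain ⟨s, hs_mono, hs_lt, hs_tendsto⟩ := exists_seq_strictMono_tendsto r
  have hball : ball x r = ⋃ n, ball x (s n) := by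
    ext y
    simp only [mem_ball, mem_iUnion]
    exact ⟨fun hy => (hs_tendsto.eventually_const_lt hy).exists,
      fun ⟨n, hn⟩ => hn.trans (hs_lt n)⟩
  have hdir : Directed (· ⊆ ·) fun n => ball x (s n) :=
    Monotone.directed_le fun _ _ h => ball_subset_ball (hs_mono.monotone h)
  simp only [hball, setLIntegral_iUnion_of_directed _ hdir, lt_iSup_iff] at ha
  obtain ⟨n, hn⟩ := ha
  filter_upwards [ball_mem_nhds x (sub_pos.2 (hs_lt n))] with z hz
  refine hn.trans_le (lintegral_mono_set (ball_subset_ball' ?_))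
  rw [mem_ball, dist_comm] at hz
  linarith

section WeakType

variable [SeparableSpace X]

omit [MeasurableSpace X] in
lemma exists_countable_disjoint_ball_subset_iUnion_closedBall {S : Set X} {r : X → ℝ} {R : ℝ}
    (hr_pos : ∀ x ∈ S, 0 < r x) (hr_le : ∀ x ∈ S, r x ≤ R) :
    ∃ u ⊆ S, u.Countable ∧ (u.PairwiseDisjoint fun x => ball x (r x)) ∧
      S ⊆ ⋃ x ∈ u, closedBall x (5 * r x) := by
  obtain ⟨u, huS, hdisj, hcover⟩ :=
    Vitali.exists_disjoint_subfamily_covering_enlargement_closedBall S id r R hr_le 5 (by norm_num)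
  have hdisj_ball : u.PairwiseDisjoint fun x => ball x (r x) :=
    hdisj.mono fun _ => ball_subset_closedBall
  refine ⟨u, huS, ?_, hdisj_ball, fun x hx => ?_⟩
  · exact hdisj_ball.countable_of_isOpen (fun _ _ => isOpen_ball)
      fun x hx => ⟨x, mem_ball_self (hr_pos x (huS hx))⟩
  · obtain ⟨y, hy, hxy⟩ := hcover x hx
    exact mem_biUnion hy (hxy (mem_closedBall_self (hr_pos x hx).le))

variable [OpensMeasurableSpace X] {μ : Measure X} {C : ℝ≥0}

lemma mul_measure_exists_le_lt_setLAverage_ball_le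
    (hC : ∀ x r, 0 < r → μ (closedBall x (5 * r)) ≤ C * μ (ball x r))
    (f : X → ℝ≥0∞) (t : ℝ≥0∞) (R : ℝ) :
    t * μ {x | ∃ r, 0 < r ∧ r ≤ R ∧ t < ⨍⁻ y in ball x r, f y ∂μ} ≤ C * ∫⁻ y, f y ∂μ := by
  set S := {x | ∃ r, 0 < r ∧ r ≤ R ∧ t < ⨍⁻ y in ball x r, f y ∂μ}
  choose! r hr_pos hr_le ht using fun x (hx : x ∈ S) => hx
  obtain ⟨u, huS, hu, hdisj, hcover⟩ :=
    exists_countable_disjoint_ball_subset_iUnion_closedBall hr_pos hr_le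
  have hball (x : u) : t * μ (closedBall x (5 * r x)) ≤ C * ∫⁻ y in ball x (r x), f y ∂μ :=
    calc t * μ (closedBall x (5 * r x)) ≤ t * (C * μ (ball x (r x))) := by
          gcongr
          exact hC x _ (hr_pos x (huS x.2))
      _ = C * (t * μ (ball x (r x))) := by ring
      _ ≤ C * ∫⁻ y in ball x (r x), f y ∂μ := by
          gcongr
          refine ENNReal.mul_le_of_le_div ?_
          rw [← setLAverage_eq]
          exact (ht x (huS x.2)).le
  have := hu.to_subtype
  calc t * μ S ≤ t * ∑' x : u, μ (closedBall x (5 * r x)) := by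
        gcongr
        exact (measure_mono hcover).trans (measure_biUnion_le μ hu _)
    _ ≤ ∑' x : u, C * ∫⁻ y in ball x (r x), f y ∂μ := by
        rw [← ENNReal.tsum_mul_left]
        exact ENNReal.tsum_le_tsum hball
    _ = C * ∫⁻ y in ⋃ x ∈ u, ball x (r x), f y ∂μ := by
        rw [ENNReal.tsum_mul_left, lintegral_biUnion hu (fun _ _ => measurableSet_ball) hdisj]
    _ ≤ C * ∫⁻ y, f y ∂μ := by
        gcongr C * ?_
        exact setLIntegral_le_lintegral _ _

theorem mul_measure_lt_hardyLittlewoodMaximal_le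
    (hC : ∀ x r, 0 < r → μ (closedBall x (5 * r)) ≤ C * μ (ball x r))
    (f : X → ℝ≥0∞) (t : ℝ≥0∞) :
    t * μ {x | t < hardyLittlewoodMaximal μ f x} ≤ C * ∫⁻ y, f y ∂μ := by
  have hunion : {x | t < hardyLittlewoodMaximal μ f x} =
      ⋃ n : ℕ, {x | ∃ r : ℝ, 0 < r ∧ r ≤ n ∧ t < ⨍⁻ y in ball x r, f y ∂μ} := by
    ext x
    simp only [hardyLittlewoodMaximal, mem_ofPred_eq, lt_iSup_iff, mem_iUnion]
    constructor
    · rintro ⟨r, hr, ht⟩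
      obtain ⟨n, hn⟩ := exists_nat_ge r
      exact ⟨n, r, hr, hn, ht⟩
    · rintro ⟨-, r, hr, -, ht⟩
      exact ⟨r, hr, ht⟩
  rw [hunion, Monotone.measure_iUnion, ENNReal.mul_iSup]
  · exact iSup_le fun n => mul_measure_exists_le_lt_setLAverage_ball_le hC f t n
  · rintro m n hmn x ⟨r, hr, hrm, ht⟩
    exact ⟨r, hr, hrm.trans (by exact_mod_cast hmn), ht⟩

-- Only the part of `f` above height `t / 2` can push its averages above `t`.
lemma mul_measure_lt_hardyLittlewoodMaximal_le_setLIntegral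
    (hC : ∀ x r, 0 < r → μ (closedBall x (5 * r)) ≤ C * μ (ball x r))
    (f : X → ℝ≥0∞) (t : ℝ≥0∞) :
    t * μ {x | t < hardyLittlewoodMaximal μ f x} ≤
      2 * C * ∫⁻ y in {y | t < 2 * f y}, f y ∂μ := by
  set g := {y | t < 2 * f y}.indicator f with hg
  have hfg (y : X) : f y ≤ g y + t / 2 := by
    by_cases hy : t < 2 * f y
    · rw [hg, indicator_of_mem (by exact hy)]
      exact le_self_add
    · refine le_add_left ?_
      rw [ENNReal.le_div_iff_mul_le (.inl two_ne_zero) (.inl ofNat_ne_top), mul_comm]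
      exact not_lt.1 hy
  have hsubset :
      {x | t < hardyLittlewoodMaximal μ f x} ⊆ {x | t / 2 < hardyLittlewoodMaximal μ g x} := by
    intro x (hx : t < _)
    by_contra hgx
    refine hx.not_ge ?_
    calc hardyLittlewoodMaximal μ f x ≤ hardyLittlewoodMaximal μ g x + t / 2 :=
          hardyLittlewoodMaximal_le_add_const μ hfg x
      _ ≤ t / 2 + t / 2 := by
          gcongr
          exact not_lt.1 hgx
      _ = t := ENNReal.add_halves t
  calc t * μ {x | t < hardyLittlewoodMaximal μ f x}
      ≤ t * μ {x | t / 2 < hardyLittlewoodMaximal μ g x} := by gcongr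
    _ = 2 * (t / 2 * μ {x | t / 2 < hardyLittlewoodMaximal μ g x}) := by
        rw [← mul_assoc, ENNReal.mul_div_cancel two_ne_zero ofNat_ne_top]
    _ ≤ 2 * (C * ∫⁻ y, g y ∂μ) := by
        gcongr 2 * ?_
        exact mul_measure_lt_hardyLittlewoodMaximal_le hC g _
    _ ≤ 2 * (C * ∫⁻ y in {y | t < 2 * f y}, f y ∂μ) := by
        gcongr 2 * (C * ?_)
        exact lintegral_indicator_le f _
    _ = _ := (mul_assoc _ _ _).symm

lemma measure_lt_hardyLittlewoodMaximal_mul_rpow_le [SFinite μ]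
    (hC : ∀ x r, 0 < r → μ (closedBall x (5 * r)) ≤ C * μ (ball x r))
    (f : X → ℝ≥0∞) (q : ℝ) {t : ℝ} (ht : 0 < t) :
    μ {x | ENNReal.ofReal t < hardyLittlewoodMaximal μ f x} * ENNReal.ofReal (t ^ q) ≤
      2 * C * (μ.withDensity f {x | ENNReal.ofReal t < 2 * f x} *
        ENNReal.ofReal (t ^ (q - 1))) := by
  have hpow : t ^ q = t * t ^ (q - 1) := by
    rw [Real.rpow_sub_one ht.ne', mul_div_cancel₀ _ ht.ne']
  calc μ {x | ENNReal.ofReal t < hardyLittlewoodMaximal μ f x} * ENNReal.ofReal (t ^ q)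
      = ENNReal.ofReal t * μ {x | ENNReal.ofReal t < hardyLittlewoodMaximal μ f x} *
          ENNReal.ofReal (t ^ (q - 1)) := by
        rw [hpow, ENNReal.ofReal_mul ht.le]
        ring
    _ ≤ 2 * C * μ.withDensity f {x | ENNReal.ofReal t < 2 * f x} *
          ENNReal.ofReal (t ^ (q - 1)) := by
        rw [withDensity_apply']
        gcongr ?_ * _
        exact mul_measure_lt_hardyLittlewoodMaximal_le_setLIntegral hC f _
    _ = _ := mul_assoc _ _ _

theorem lintegral_hardyLittlewoodMaximal_rpow_le [SFinite μ]
    (hC : ∀ x r, 0 < r → μ (closedBall x (5 * r)) ≤ C * μ (ball x r))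
    {f : X → ℝ≥0∞} (hf : AEMeasurable f μ) (hMf : AEMeasurable (hardyLittlewoodMaximal μ f) μ)
    {p : ℝ} (hp : 1 < p) :
    ∫⁻ x, hardyLittlewoodMaximal μ f x ^ p ∂μ ≤
      ENNReal.ofReal (p / (p - 1)) * 2 ^ p * C * ∫⁻ x, f x ^ p ∂μ := by
  set ν := μ.withDensity f
  have hp₁ : 0 < p - 1 := sub_pos.2 hp
  have hmoment : ENNReal.ofReal (p - 1) * ∫⁻ t in Ioi (0 : ℝ),
      ν {x | ENNReal.ofReal t < 2 * f x} * ENNReal.ofReal (t ^ (p - 1 - 1)) =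
        2 ^ (p - 1) * ∫⁻ x, f x ^ p ∂μ := by
    rw [← lintegral_rpow_eq_lintegral_meas_ofReal_lt_mul ν
      ((hf.const_mul 2).mono_ac (withDensity_absolutelyContinuous μ f)) hp₁,
      lintegral_mul_rpow_withDensity_self hf 2 hp₁.le, sub_add_cancel]
  calc ∫⁻ x, hardyLittlewoodMaximal μ f x ^ p ∂μ
      = ENNReal.ofReal p * ∫⁻ t in Ioi (0 : ℝ),
          μ {x | ENNReal.ofReal t < hardyLittlewoodMaximal μ f x} *
            ENNReal.ofReal (t ^ (p - 1)) :=
        lintegral_rpow_eq_lintegral_meas_ofReal_lt_mul μ hMf (zero_lt_one.trans hp)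
    _ ≤ ENNReal.ofReal p * ∫⁻ t in Ioi (0 : ℝ),
          2 * C * (ν {x | ENNReal.ofReal t < 2 * f x} * ENNReal.ofReal (t ^ (p - 1 - 1))) := by
        gcongr ENNReal.ofReal p * ?_
        exact setLIntegral_mono' measurableSet_Ioi fun t ht =>
          measure_lt_hardyLittlewoodMaximal_mul_rpow_le hC f (p - 1) ht
    _ = ENNReal.ofReal (p / (p - 1)) * 2 * C * (2 ^ (p - 1) * ∫⁻ x, f x ^ p ∂μ) := by
        rw [lintegral_const_mul' _ _ (mul_ne_top ofNat_ne_top coe_ne_top), ← hmoment,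
          ← div_mul_cancel₀ p hp₁.ne', ENNReal.ofReal_mul (by positivity),
          div_mul_cancel₀ p hp₁.ne']
        ring
    _ = _ := by
        have htwo : (2 : ℝ≥0∞) ^ p = 2 * 2 ^ (p - 1) := by
          simpa using ENNReal.rpow_add_of_nonneg (x := 2) 1 (p - 1) zero_le_one hp₁.le
        rw [htwo]
        ring

end WeakType

end MaximalFunction

section Homothety

variable {E : Type*} [NormedAddCommGroup E] [NormedSpace ℝ E]

lemma homothety_image_ball (x : E) (r : ℝ) {t : ℝ} (ht : 0 < t) :
    AffineMap.homothety x t '' ball x r = ball x (t * r) := by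
  have hleft : Function.LeftInverse (AffineMap.homothety x t⁻¹) (AffineMap.homothety x t) :=
    fun y => by simp [← AffineMap.homothety_mul_apply, ht.ne']
  have hright : Function.RightInverse (AffineMap.homothety x t⁻¹) (AffineMap.homothety x t) :=
    fun y => by simp [← AffineMap.homothety_mul_apply, ht.ne']
  rw [image_eq_preimage_of_inverse hleft hright]
  ext y
  rw [mem_preimage, mem_ball, mem_ball, dist_homothety_center, norm_inv, Real.norm_of_nonneg ht.le,
    inv_mul_lt_iff₀ ht, dist_comm]

end Homothety

section Haar

variable {E : Type*} [NormedAddCommGroup E] [MeasurableSpace E] [BorelSpace E]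
  (μ : Measure E) [μ.IsAddHaarMeasure]

lemma measurable_hardyLittlewoodMaximal (f : E → ℝ≥0∞) :
    Measurable (hardyLittlewoodMaximal μ f) := by
  refine (lowerSemicontinuous_biSup fun r hr => ?_).measurable
  have hne : (μ (ball (0 : E) r))⁻¹ ≠ ∞ := ENNReal.inv_ne_top.2 (measure_ball_pos μ 0 hr).ne'
  simp_rw [setLAverage_eq, Measure.addHaar_ball_center, ENNReal.div_eq_inv_mul]
  exact (ENNReal.continuous_const_mul hne).comp_lowerSemicontinuous
    (lowerSemicontinuous_setLIntegral_ball μ f r) fun _ _ h => mul_le_mul_right h _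

variable [NormedSpace ℝ E] [FiniteDimensional ℝ E]

lemma addHaar_closedBall_mul_eq_pow_mul_ball (x : E) {r k : ℝ} (hk : 0 ≤ k) (hr : 0 < r) :
    μ (closedBall x (k * r)) = ENNReal.ofReal k ^ finrank ℝ E * μ (ball x r) := by
  rw [Measure.addHaar_closedBall μ x (by positivity), Measure.addHaar_ball_of_pos μ x hr,
    mul_pow, ENNReal.ofReal_mul (by positivity), ENNReal.ofReal_pow hk, mul_assoc]

theorem lintegral_hardyLittlewoodMaximal_sq_le {f : E → ℝ≥0∞} (hf : AEMeasurable f μ) :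
    ∫⁻ x, hardyLittlewoodMaximal μ f x ^ 2 ∂μ ≤
      8 * 5 ^ finrank ℝ E * ∫⁻ x, f x ^ 2 ∂μ := by
  have hdoubling (x : E) (r : ℝ) (hr : 0 < r) :
      μ (closedBall x (5 * r)) ≤ (5 ^ finrank ℝ E : ℝ≥0) * μ (ball x r) := by
    rw [addHaar_closedBall_mul_eq_pow_mul_ball μ x (by norm_num) hr]
    simp
  have hconst : ENNReal.ofReal (2 / (2 - 1)) * 2 ^ 2 * ((5 ^ finrank ℝ E : ℝ≥0) : ℝ≥0∞) =
      8 * 5 ^ finrank ℝ E := by norm_num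
  have h := lintegral_hardyLittlewoodMaximal_rpow_le hdoubling hf
    (measurable_hardyLittlewoodMaximal μ f).aemeasurable one_lt_two
  simp only [ENNReal.rpow_two] at h
  rwa [hconst] at h

lemma setLAverage_ball_lineMap (g : E → ℝ≥0∞) (x : E) (r : ℝ) {t : ℝ} (ht : 0 < t) :
    ⨍⁻ y in ball x r, g (AffineMap.lineMap x y t) ∂μ = ⨍⁻ y in ball x (t * r), g y ∂μ := by
  have hderiv (y : E) :
      HasFDerivAt (AffineMap.homothety x t) (t • ContinuousLinearMap.id ℝ E) y :=
    (((hasFDerivAt_id y).sub_const x).const_smul t).add_const x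
  have hscale_zero : ENNReal.ofReal |t ^ finrank ℝ E| ≠ 0 :=
    (ofReal_pos.2 (abs_pos.2 (pow_pos ht _).ne')).ne'
  rw [← homothety_image_ball x r ht, setLAverage_eq, setLAverage_eq,
    lintegral_image_eq_lintegral_abs_det_fderiv_mul μ measurableSet_ball
      (fun y _ => (hderiv y).hasFDerivWithinAt) (AffineMap.homothety_injective x ht.ne').injOn,
    Measure.addHaar_image_homothety]
  simp only [ContinuousLinearMap.det, ContinuousLinearMap.toLinearMap_smul,
    ContinuousLinearMap.coe_id, LinearMap.det_smul, LinearMap.det_id, mul_one,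
    AffineMap.homothety_eq_lineMap]
  rw [lintegral_const_mul' _ _ ofReal_ne_top,
    ENNReal.mul_div_mul_left _ _ hscale_zero ofReal_ne_top]

end Haar

section Poincare

variable {E F : Type*} [NormedAddCommGroup E] [NormedSpace ℝ E] [NormedAddCommGroup F]
  [NormedSpace ℝ F] {u : E → F}

lemma enorm_sub_le_mul_lintegral_enorm_fderiv_lineMap (hu : ContDiff ℝ 1 u) (x y : E) :
    ‖u y - u x‖ₑ ≤
      ‖y - x‖ₑ * ∫⁻ t in Ioc (0 : ℝ) 1, ‖fderiv ℝ u (AffineMap.lineMap x y t)‖ₑ := by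
  have hderiv (t : ℝ) : HasDerivAt (fun t : ℝ => u (AffineMap.lineMap x y t))
      (fderiv ℝ u (AffineMap.lineMap x y t) (y - x)) t :=
    (hu.differentiable one_ne_zero _).hasFDerivAt.comp_hasDerivAt t AffineMap.hasDerivAt_lineMap
  have hline : ContDiff ℝ 1 fun t : ℝ => u (AffineMap.lineMap x y t) :=
    hu.comp (AffineMap.contDiff_lineMap x y)
  calc ‖u y - u x‖ₑ
      ≤ ∫⁻ t in Icc (0 : ℝ) 1, ‖deriv (fun t : ℝ => u (AffineMap.lineMap x y t)) t‖ₑ := by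
        simpa using enorm_sub_le_lintegral_deriv_of_contDiffOn_Icc hline.contDiffOn zero_le_one
    _ ≤ ∫⁻ t in Icc (0 : ℝ) 1, ‖y - x‖ₑ * ‖fderiv ℝ u (AffineMap.lineMap x y t)‖ₑ := by
        refine lintegral_mono fun t => ?_
        rw [(hderiv t).deriv, mul_comm]
        exact ContinuousLinearMap.le_opENorm _ _
    _ = _ := by
        rw [lintegral_const_mul' _ _ enorm_ne_top, Measure.restrict_congr_set Ioc_ae_eq_Icc]

variable [FiniteDimensional ℝ E] [MeasurableSpace E] [BorelSpace E]
  (μ : Measure E) [μ.IsAddHaarMeasure]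

lemma setLAverage_lintegral_swap_lineMap {g : E → ℝ≥0∞} (hg : Measurable g) (x : E) (r : ℝ) :
    ⨍⁻ y in ball x r, (∫⁻ t in Ioc (0 : ℝ) 1, g (AffineMap.lineMap x y t)) ∂μ =
      ∫⁻ t in Ioc (0 : ℝ) 1, ⨍⁻ y in ball x r, g (AffineMap.lineMap x y t) ∂μ := by
  have hline : Measurable fun p : E × ℝ => AffineMap.lineMap x p.1 p.2 := by
    simp only [AffineMap.lineMap_apply_module]
    fun_prop
  exact lintegral_lintegral_swap (hg.comp hline).aemeasurable

theorem setLAverage_ball_enorm_sub_le (hu : ContDiff ℝ 1 u) (x : E) {r : ℝ} (hr : 0 < r) :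
    ⨍⁻ y in ball x r, ‖u y - u x‖ₑ ∂μ ≤
      ENNReal.ofReal r * hardyLittlewoodMaximal μ (fun z => ‖fderiv ℝ u z‖ₑ) x := by
  have hmeas : Measurable fun z => ‖fderiv ℝ u z‖ₑ :=
    (hu.continuous_fderiv one_ne_zero).enorm.measurable
  calc ⨍⁻ y in ball x r, ‖u y - u x‖ₑ ∂μ
      ≤ ⨍⁻ y in ball x r, ENNReal.ofReal r *
          (∫⁻ t in Ioc (0 : ℝ) 1, ‖fderiv ℝ u (AffineMap.lineMap x y t)‖ₑ) ∂μ := by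
        rw [setLAverage_eq, setLAverage_eq]
        gcongr ?_ / _
        refine setLIntegral_mono' measurableSet_ball fun y hy => ?_
        refine (enorm_sub_le_mul_lintegral_enorm_fderiv_lineMap hu x y).trans ?_
        gcongr
        rw [← ofReal_norm]
        exact ofReal_le_ofReal (mem_ball_iff_norm.1 hy).le
    _ = ENNReal.ofReal r * ∫⁻ t in Ioc (0 : ℝ) 1,
          ⨍⁻ y in ball x r, ‖fderiv ℝ u (AffineMap.lineMap x y t)‖ₑ ∂μ := by
        rw [laverage, lintegral_const_mul' _ _ ofReal_ne_top, ← laverage,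
          setLAverage_lintegral_swap_lineMap μ hmeas]
    _ ≤ ENNReal.ofReal r * ∫⁻ _ in Ioc (0 : ℝ) 1,
          hardyLittlewoodMaximal μ (fun z => ‖fderiv ℝ u z‖ₑ) x := by
        gcongr ENNReal.ofReal r * ?_
        refine setLIntegral_mono' measurableSet_Ioc fun t ht => ?_
        rw [setLAverage_ball_lineMap μ (fun z => ‖fderiv ℝ u z‖ₑ) x r ht.1]
        exact setLAverage_ball_le_hardyLittlewoodMaximal μ _ x (mul_pos ht.1 hr)
    _ = _ := by simp

theorem enorm_le_mul_hardyLittlewoodMaximal_add_enorm_setAverage [CompleteSpace F]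
    (hu : ContDiff ℝ 1 u) (x : E) {r : ℝ} (hr : 0 < r) :
    ‖u x‖ₑ ≤ ENNReal.ofReal r * hardyLittlewoodMaximal μ (fun z => ‖fderiv ℝ u z‖ₑ) x +
      ‖⨍ y in ball x r, u y ∂μ‖ₑ := by
  have hint (v : E → F) (hv : Continuous v) : IntegrableOn v (ball x r) μ :=
    (hv.continuousOn.integrableOn_compact (isCompact_closedBall x r)).mono_set
      ball_subset_closedBall
  have hball : μ (ball x r) ≠ 0 := (measure_ball_pos μ x hr).ne'
  have haverage : ⨍ y in ball x r, (u y - u x) ∂μ = (⨍ y in ball x r, u y ∂μ) - u x := by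
    rw [average, integral_sub (hint u hu.continuous).to_average
      (hint _ continuous_const).to_average, ← average, ← average,
      setAverage_const hball measure_ball_lt_top.ne]
  calc ‖u x‖ₑ = ‖(⨍ y in ball x r, u y ∂μ) - ⨍ y in ball x r, (u y - u x) ∂μ‖ₑ := by
        rw [haverage, _root_.sub_sub_cancel]
    _ ≤ ‖⨍ y in ball x r, u y ∂μ‖ₑ + ‖⨍ y in ball x r, (u y - u x) ∂μ‖ₑ := enorm_sub_le
    _ ≤ ‖⨍ y in ball x r, u y ∂μ‖ₑ +
          ENNReal.ofReal r * hardyLittlewoodMaximal μ (fun z => ‖fderiv ℝ u z‖ₑ) x := by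
        gcongr
        exact (enorm_integral_le_lintegral_enorm _).trans (setLAverage_ball_enorm_sub_le μ hu x hr)
    _ = _ := add_comm _ _

end Poincare

section Bessel

variable {ι 𝕜 : Type*} [RCLike 𝕜]

lemma tsum_enorm_inner_sq_le_of_orthonormal {H : Type*} [SeminormedAddCommGroup H]
    [InnerProductSpace 𝕜 H] {v : ι → H} (hv : Orthonormal 𝕜 v) (x : H) :
    ∑' i, ‖inner 𝕜 (v i) x‖ₑ ^ 2 ≤ ‖x‖ₑ ^ 2 := by
  simp only [← ofReal_norm, ← ENNReal.ofReal_pow (norm_nonneg _)]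
  rw [← ofReal_tsum_of_nonneg (fun _ => sq_nonneg _) (hv.inner_products_summable x)]
  exact ofReal_le_ofReal (hv.tsum_inner_products_le x)

variable {α : Type*} [MeasurableSpace α] {μ : Measure α}

lemma memLp_two_of_integral_mul_conj_ne_zero {f : α → 𝕜} (hf : AEStronglyMeasurable f μ)
    (h : ∫ x, f x * starRingEnd 𝕜 (f x) ∂μ ≠ 0) : MemLp f 2 μ := by
  rw [memLp_two_iff_integrable_sq_norm hf]
  refine (Integrable.of_integral_ne_zero h).norm.congr (.of_forall fun x => ?_)
  simp [sq]

theorem tsum_enorm_setIntegral_sq_le [DecidableEq ι] {u : ι → α → 𝕜}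
    (hu : ∀ i, AEStronglyMeasurable (u i) μ)
    (horth : ∀ i j, ∫ x, u i x * starRingEnd 𝕜 (u j x) ∂μ = if i = j then 1 else 0)
    {s : Set α} (hs : MeasurableSet s) (hμs : μ s ≠ ∞) :
    ∑' i, ‖∫ x in s, u i x ∂μ‖ₑ ^ 2 ≤ μ s := by
  have hmem (i : ι) : MemLp (u i) 2 μ :=
    memLp_two_of_integral_mul_conj_ne_zero (hu i) (by simp [horth])
  have horthonormal : Orthonormal 𝕜 fun i => (hmem i).toLp (u i) := by
    rw [orthonormal_iff_ite]
    intro i j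
    rw [L2.inner_def, ← ite_congr (propext eq_comm) (fun _ => rfl) fun _ => rfl, ← horth j i]
    refine integral_congr_ae ?_
    filter_upwards [(hmem i).coeFn_toLp, (hmem j).coeFn_toLp] with x hi hj
    rw [hi, hj, RCLike.inner_apply]
  have hinner (i : ι) : ‖inner 𝕜 ((hmem i).toLp (u i)) (indicatorConstLp 2 hs hμs (1 : 𝕜))‖ₑ =
      ‖∫ x in s, u i x ∂μ‖ₑ := by
    rw [← ofReal_norm, norm_inner_symm, L2.inner_indicatorConstLp_one hs hμs, ofReal_norm]
    congr 1
    exact setIntegral_congr_ae hs ((hmem i).coeFn_toLp.mono fun x hx _ => hx)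
  calc ∑' i, ‖∫ x in s, u i x ∂μ‖ₑ ^ 2
      = ∑' i, ‖inner 𝕜 ((hmem i).toLp (u i)) (indicatorConstLp 2 hs hμs (1 : 𝕜))‖ₑ ^ 2 := by
        simp only [hinner]
    _ ≤ ‖indicatorConstLp 2 hs hμs (1 : 𝕜)‖ₑ ^ 2 :=
        tsum_enorm_inner_sq_le_of_orthonormal horthonormal _
    _ ≤ (‖(1 : 𝕜)‖ₑ * μ s ^ (1 / (2 : ℝ≥0∞).toReal)) ^ 2 := by
        gcongr
        exact enorm_indicatorConstLp_le
    _ = μ s := by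
        rw [enorm_one, one_mul, ← ENNReal.rpow_mul_natCast]
        simp

theorem tsum_enorm_setAverage_sq_le [DecidableEq ι] {u : ι → α → 𝕜}
    (hu : ∀ i, AEStronglyMeasurable (u i) μ)
    (horth : ∀ i j, ∫ x, u i x * starRingEnd 𝕜 (u j x) ∂μ = if i = j then 1 else 0)
    {s : Set α} (hs : MeasurableSet s) (hμs₀ : μ s ≠ 0) (hμs : μ s ≠ ∞) :
    ∑' i, ‖⨍ x in s, u i x ∂μ‖ₑ ^ 2 ≤ (μ s)⁻¹ := by
  have haverage (i : ι) :
      ‖⨍ x in s, u i x ∂μ‖ₑ ^ 2 = (μ s)⁻¹ ^ 2 * ‖∫ x in s, u i x ∂μ‖ₑ ^ 2 := by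
    rw [setAverage_eq, enorm_smul, mul_pow, measureReal_def, ← toReal_inv,
      Real.enorm_of_nonneg toReal_nonneg, ofReal_toReal (inv_ne_top.2 hμs₀)]
  calc ∑' i, ‖⨍ x in s, u i x ∂μ‖ₑ ^ 2 = (μ s)⁻¹ ^ 2 * ∑' i, ‖∫ x in s, u i x ∂μ‖ₑ ^ 2 := by
        simp only [haverage, ENNReal.tsum_mul_left]
    _ ≤ (μ s)⁻¹ ^ 2 * μ s := by
        gcongr
        exact tsum_enorm_setIntegral_sq_le hu horth hs hμs
    _ = (μ s)⁻¹ := by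
        rw [sq, mul_assoc, ENNReal.inv_mul_cancel hμs₀ hμs, mul_one]

end Bessel

section Optimization

lemma ennreal_add_sq_le (a b : ℝ≥0∞) : (a + b) ^ 2 ≤ 2 * (a ^ 2 + b ^ 2) := by
  simpa [mul_add, show (2 : ℝ) - 1 = 1 by norm_num] using
    ENNReal.rpow_add_le_mul_rpow_add_rpow a b one_le_two

lemma rpow_one_add_le_of_forall_le {R G : ℝ≥0∞} {a : ℝ} (ha : 0 < a)
    (h : ∀ w : ℝ≥0∞, w ≠ 0 → w ≠ ∞ → R ≤ 2 * (w ^ a * G + w⁻¹)) :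
    R ^ (1 + a) ≤ 4 ^ (1 + a) * G := by
  have ha₁ : 0 < 1 + a := by positivity
  rcases eq_or_ne R 0 with rfl | hR₀
  · simp [ENNReal.zero_rpow_of_pos ha₁]
  rcases eq_or_ne R ∞ with rfl | hR
  · have hG : G = ∞ := by simpa [ENNReal.mul_eq_top] using h 1 one_ne_zero one_ne_top
    simp [hG, ENNReal.mul_top, ENNReal.rpow_eq_zero_iff, ha₁.not_gt]
  -- At `w = 4 / R` the second term of the bound is absorbed into the left-hand side.
  have habsorb : R / 2 ≤ 2 * ((4 / R) ^ a * G) := by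
    have hw := h (4 / R) (ENNReal.div_pos (by norm_num) hR).ne'
      (ENNReal.div_ne_top (by norm_num) hR₀)
    have hhalf : 2 * (4 / R)⁻¹ = R / 2 := by
      rw [ENNReal.inv_div (.inl hR) (.inl hR₀), ← mul_div_assoc,
        show (4 : ℝ≥0∞) = 2 * 2 by norm_num, ENNReal.mul_div_mul_left _ _ two_ne_zero ofNat_ne_top]
    rw [mul_add, hhalf] at hw
    refine ENNReal.le_of_add_le_add_right (ENNReal.div_ne_top hR two_ne_zero) ?_
    rwa [ENNReal.add_halves]
  have hcancel : R ^ a * (4 / R) ^ a = 4 ^ a := by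
    rw [← ENNReal.mul_rpow_of_nonneg _ _ ha.le, ENNReal.mul_div_cancel hR₀ hR]
  calc R ^ (1 + a) = R ^ a * (2 * (R / 2)) := by
        rw [ENNReal.rpow_add_of_nonneg _ _ zero_le_one ha.le, ENNReal.rpow_one, mul_comm,
          ENNReal.mul_div_cancel two_ne_zero ofNat_ne_top]
    _ ≤ R ^ a * (2 * (2 * ((4 / R) ^ a * G))) := by gcongr
    _ = 2 * 2 * (R ^ a * (4 / R) ^ a) * G := by ring
    _ = 4 ^ (1 + a) * G := by
        rw [hcancel, ENNReal.rpow_add_of_nonneg _ _ zero_le_one ha.le, ENNReal.rpow_one]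
        norm_num

end Optimization

section LiebThirring

variable {E : Type*} [NormedAddCommGroup E] [NormedSpace ℝ E] [FiniteDimensional ℝ E]
  [MeasurableSpace E] [BorelSpace E] (μ : Measure E) [μ.IsAddHaarMeasure]

lemma exists_measure_ball_eq [Nontrivial E] (x : E) {w : ℝ≥0∞} (hw₀ : w ≠ 0) (hw : w ≠ ∞) :
    ∃ r : ℝ, 0 < r ∧ μ (ball x r) = w ∧
      ENNReal.ofReal r = (w / μ (ball 0 1)) ^ (finrank ℝ E : ℝ)⁻¹ := by
  set q := w / μ (ball (0 : E) 1)
  have hV₀ : μ (ball (0 : E) 1) ≠ 0 := (measure_ball_pos μ 0 one_pos).ne'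
  have hV : μ (ball (0 : E) 1) ≠ ∞ := measure_ball_lt_top.ne
  have hq₀ : q ≠ 0 := (ENNReal.div_pos hw₀ hV).ne'
  have hq : q ≠ ∞ := ENNReal.div_ne_top hw hV₀
  have hroot : q ^ (finrank ℝ E : ℝ)⁻¹ ≠ ∞ := rpow_ne_top_of_nonneg (by positivity) hq
  have hr : 0 < (q ^ (finrank ℝ E : ℝ)⁻¹).toReal :=
    ENNReal.toReal_pos (rpow_pos (pos_iff_ne_zero.2 hq₀) hq).ne' hroot
  refine ⟨_, hr, ?_, ofReal_toReal hroot⟩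
  rw [Measure.addHaar_ball_of_pos μ x hr, ENNReal.ofReal_pow hr.le, ofReal_toReal hroot,
    ENNReal.rpow_inv_natCast_pow finrank_pos.ne', ENNReal.div_mul_cancel hV₀ hV]

variable {ι 𝕜 : Type*} [RCLike 𝕜]

/-- The density `ρ = ∑ᵢ wᵢ |uᵢ|²` of a family of states `uᵢ` with occupation numbers `wᵢ`, with
values in `[0, ∞]` so that no summability has to be assumed. -/
noncomputable def particleDensity {α : Type*} (w : ι → ℝ≥0∞) (u : ι → α → 𝕜) (x : α) : ℝ≥0∞ :=
  ∑' i, w i * ‖u i x‖ₑ ^ 2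

lemma particleDensity_ofReal {α : Type*} {l : ι → ℝ} (hl : ∀ i, 0 ≤ l i) (u : ι → α → 𝕜) (x : α) :
    particleDensity (fun i => ENNReal.ofReal (l i)) u x =
      ∑' i, ENNReal.ofReal (l i * ‖u i x‖ ^ 2) := by
  simp only [particleDensity, ENNReal.ofReal_mul (hl _), ENNReal.ofReal_pow (norm_nonneg _),
    ofReal_norm]

variable [DecidableEq ι] {w : ι → ℝ≥0∞} {u : ι → E → 𝕜}

theorem particleDensity_le (hw : ∀ i, w i ≤ 1) (hu : ∀ i, ContDiff ℝ 1 (u i))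
    (horth : ∀ i j, ∫ x, u i x * starRingEnd 𝕜 (u j x) ∂μ = if i = j then 1 else 0)
    (x : E) {r : ℝ} (hr : 0 < r) :
    particleDensity w u x ≤ 2 * (ENNReal.ofReal r ^ 2 *
      ∑' i, w i * hardyLittlewoodMaximal μ (fun z => ‖fderiv ℝ (u i) z‖ₑ) x ^ 2 +
        (μ (ball x r))⁻¹) := by
  set M := fun i => hardyLittlewoodMaximal μ (fun z => ‖fderiv ℝ (u i) z‖ₑ) x
  set A := fun i => ‖⨍ y in ball x r, u i y ∂μ‖ₑ
  have hbessel : ∑' i, A i ^ 2 ≤ (μ (ball x r))⁻¹ :=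
    tsum_enorm_setAverage_sq_le (fun i => (hu i).continuous.aestronglyMeasurable) horth
      measurableSet_ball (measure_ball_pos μ x hr).ne' measure_ball_lt_top.ne
  calc particleDensity w u x
      ≤ ∑' i, w i * (2 * ((ENNReal.ofReal r * M i) ^ 2 + A i ^ 2)) := by
        refine ENNReal.tsum_le_tsum fun i => ?_
        gcongr
        refine le_trans ?_ (ennreal_add_sq_le _ _)
        gcongr
        exact enorm_le_mul_hardyLittlewoodMaximal_add_enorm_setAverage μ (hu i) x hr
    _ = ∑' i, 2 * (ENNReal.ofReal r ^ 2 * (w i * M i ^ 2) + w i * A i ^ 2) := by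
        congr 1
        ext i
        ring
    _ = 2 * (ENNReal.ofReal r ^ 2 * ∑' i, w i * M i ^ 2 + ∑' i, w i * A i ^ 2) := by
        rw [ENNReal.tsum_mul_left, ENNReal.tsum_add, ENNReal.tsum_mul_left]
    _ ≤ 2 * (ENNReal.ofReal r ^ 2 * ∑' i, w i * M i ^ 2 + (μ (ball x r))⁻¹) := by
        gcongr
        exact (ENNReal.tsum_le_tsum fun i => mul_le_of_le_one_left' (hw i)).trans hbessel

theorem particleDensity_rpow_le [Nontrivial E] (hw : ∀ i, w i ≤ 1)
    (hu : ∀ i, ContDiff ℝ 1 (u i))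
    (horth : ∀ i j, ∫ x, u i x * starRingEnd 𝕜 (u j x) ∂μ = if i = j then 1 else 0) (x : E) :
    particleDensity w u x ^ (1 + 2 / (finrank ℝ E : ℝ)) ≤
      4 ^ (1 + 2 / (finrank ℝ E : ℝ)) * (μ (ball 0 1) ^ (2 / (finrank ℝ E : ℝ)))⁻¹ *
        ∑' i, w i * hardyLittlewoodMaximal μ (fun z => ‖fderiv ℝ (u i) z‖ₑ) x ^ 2 := by
  have hdim : (0 : ℝ) < finrank ℝ E := by exact_mod_cast finrank_pos
  rw [mul_assoc]
  refine rpow_one_add_le_of_forall_le (by positivity) fun v hv₀ hv => ?_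
  obtain ⟨r, hr, hball, hroot⟩ := exists_measure_ball_eq μ x hv₀ hv
  have hsq : ENNReal.ofReal r ^ 2 =
      v ^ (2 / (finrank ℝ E : ℝ)) * (μ (ball 0 1) ^ (2 / (finrank ℝ E : ℝ)))⁻¹ := by
    rw [hroot, ← ENNReal.rpow_mul_natCast, inv_mul_eq_div, Nat.cast_ofNat,
      ENNReal.div_rpow_of_nonneg _ _ (by positivity), div_eq_mul_inv]
  rw [← mul_assoc, ← hsq, ← hball]
  exact particleDensity_le μ hw hu horth x hr

/-- A (far from optimal) constant in the Lieb–Thirring inequality. Its reciprocal is the product of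
the constants in the pointwise bound on the density and in the maximal inequality. -/
noncomputable def liebThirringConst : ℝ≥0∞ :=
  (4 ^ (1 + 2 / (finrank ℝ E : ℝ)) * (μ (ball 0 1) ^ (2 / (finrank ℝ E : ℝ)))⁻¹ *
    (8 * 5 ^ finrank ℝ E))⁻¹

omit [BorelSpace E] in
lemma liebThirringConst_ne_zero : liebThirringConst μ ≠ 0 := by
  have hV : μ (ball (0 : E) 1) ^ (2 / (finrank ℝ E : ℝ)) ≠ 0 :=
    (rpow_pos (measure_ball_pos μ 0 one_pos) measure_ball_lt_top.ne).ne'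
  refine ENNReal.inv_ne_zero.2 ?_
  finiteness

omit [BorelSpace E] in
lemma liebThirringConst_ne_top : liebThirringConst μ ≠ ∞ := by
  have hV : μ (ball (0 : E) 1) ^ (2 / (finrank ℝ E : ℝ)) ≠ ∞ :=
    rpow_ne_top_of_nonneg (by positivity) measure_ball_lt_top.ne
  have hpow : (4 : ℝ≥0∞) ^ (1 + 2 / (finrank ℝ E : ℝ)) ≠ 0 :=
    (rpow_pos four_pos ofNat_ne_top).ne'
  simp [liebThirringConst, hV, hpow]

theorem lieb_thirring_countable_general [Nontrivial E] [Countable ι] (hw : ∀ i, w i ≤ 1)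
    (hu : ∀ i, ContDiff ℝ 1 (u i))
    (horth : ∀ i j, ∫ x, u i x * starRingEnd 𝕜 (u j x) ∂μ = if i = j then 1 else 0) :
    liebThirringConst μ *
        ∫⁻ x, particleDensity w u x ^ (1 + 2 / (finrank ℝ E : ℝ)) ∂μ ≤
      ∑' i, w i * ∫⁻ x, ‖fderiv ℝ (u i) x‖ₑ ^ 2 ∂μ := by
  set a := 2 / (finrank ℝ E : ℝ)
  set V := μ (ball (0 : E) 1)
  set M := fun i => hardyLittlewoodMaximal μ (fun z => ‖fderiv ℝ (u i) z‖ₑ)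
  have hM (i : ι) : Measurable (M i) := measurable_hardyLittlewoodMaximal μ _
  rw [liebThirringConst,
    ENNReal.inv_mul_le_iff (ENNReal.inv_ne_top.1 (liebThirringConst_ne_top μ))
    (ENNReal.inv_ne_zero.1 (liebThirringConst_ne_zero μ))]
  calc ∫⁻ x, particleDensity w u x ^ (1 + a) ∂μ
      ≤ ∫⁻ x, 4 ^ (1 + a) * (V ^ a)⁻¹ * ∑' i, w i * M i x ^ 2 ∂μ :=
        lintegral_mono fun x => particleDensity_rpow_le μ hw hu horth x
    _ = 4 ^ (1 + a) * (V ^ a)⁻¹ * ∑' i, w i * ∫⁻ x, M i x ^ 2 ∂μ := by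
        rw [lintegral_const_mul _ (.tsum fun i => ((hM i).pow_const 2).const_mul _),
          lintegral_tsum fun i => (((hM i).pow_const 2).const_mul _).aemeasurable]
        simp only [lintegral_const_mul _ ((hM _).pow_const 2)]
    _ ≤ 4 ^ (1 + a) * (V ^ a)⁻¹ *
          ∑' i, w i * (8 * 5 ^ finrank ℝ E * ∫⁻ x, ‖fderiv ℝ (u i) x‖ₑ ^ 2 ∂μ) := by
        gcongr with i
        exact lintegral_hardyLittlewoodMaximal_sq_le μ
          ((hu i).continuous_fderiv one_ne_zero).enorm.aemeasurable
    _ = 4 ^ (1 + a) * (V ^ a)⁻¹ * (8 * 5 ^ finrank ℝ E) *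
          ∑' i, w i * ∫⁻ x, ‖fderiv ℝ (u i) x‖ₑ ^ 2 ∂μ := by
        simp only [mul_left_comm (w _), ENNReal.tsum_mul_left, mul_assoc]

end LiebThirring

section Gradient

lemma opNorm_sq_le_sum_norm_sq {𝕜 E F ι : Type*} [RCLike 𝕜] [NormedAddCommGroup E]
    [InnerProductSpace 𝕜 E] [SeminormedAddCommGroup F] [NormedSpace 𝕜 F] [Fintype ι]
    (b : OrthonormalBasis ι 𝕜 E) (L : E →L[𝕜] F) : ‖L‖ ^ 2 ≤ ∑ i, ‖L (b i)‖ ^ 2 := by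
  rw [← Real.le_sqrt (norm_nonneg L) (by positivity)]
  refine L.opNorm_le_bound (Real.sqrt_nonneg _) fun v => ?_
  calc ‖L v‖ = ‖∑ i, b.repr v i • L (b i)‖ := by
        conv_lhs => rw [← b.sum_repr v, map_sum]
        simp only [map_smul]
    _ ≤ ∑ i, ‖L (b i)‖ * ‖b.repr v i‖ :=
        norm_sum_le_of_le _ fun i _ => by rw [norm_smul, mul_comm]
    _ ≤ √(∑ i, ‖L (b i)‖ ^ 2) * √(∑ i, ‖b.repr v i‖ ^ 2) := Real.sum_mul_le_sqrt_mul_sqrt _ _ _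
    _ = √(∑ i, ‖L (b i)‖ ^ 2) * ‖v‖ := by
        rw [← EuclideanSpace.norm_eq, LinearIsometryEquiv.norm_map]

lemma enorm_fderiv_sq_le_ofReal_gradSq {d : ℕ} (f : EuclideanSpace ℝ (Fin d) → ℂ)
    (x : EuclideanSpace ℝ (Fin d)) : ‖fderiv ℝ f x‖ₑ ^ 2 ≤ ENNReal.ofReal (gradSq f x) := by
  rw [← ofReal_norm, ← ENNReal.ofReal_pow (norm_nonneg _)]
  refine ofReal_le_ofReal ?_
  simpa [gradSq] using opNorm_sq_le_sum_norm_sq (EuclideanSpace.basisFun (Fin d) ℝ) (fderiv ℝ f x)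

end Gradient

/-- **Lieb–Thirring inequality** for countable orthonormal families of `C¹` functions,
with occupation numbers `0 ≤ λₙ ≤ 1`. Both sides are interpreted in `[0,∞]`. -/
theorem lieb_thirring_countable (d : ℕ) (hd : 1 ≤ d) :
    ∃ K : ℝ, 0 < K ∧
      ∀ (u : ℕ → EuclideanSpace ℝ (Fin d) → ℂ) (lam : ℕ → ℝ),
        (∀ n, ContDiff ℝ 1 (u n)) →
        (∀ m n : ℕ, ∫ x, u m x * (starRingEnd ℂ) (u n x) = if m = n then 1 else 0) →
        (∀ n, 0 ≤ lam n ∧ lam n ≤ 1) →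
        ENNReal.ofReal K *
            ∫⁻ x, (∑' n, ENNReal.ofReal (lam n * ‖u n x‖ ^ 2)) ^ (1 + 2 / (d : ℝ))
          ≤ ∑' n, ENNReal.ofReal (lam n) * ∫⁻ x, ENNReal.ofReal (gradSq (u n) x) := by
  have : Nontrivial (EuclideanSpace ℝ (Fin d)) :=
    nontrivial_of_finrank_pos (R := ℝ) (by rwa [finrank_euclideanSpace_fin])
  have hK : liebThirringConst (volume : Measure (EuclideanSpace ℝ (Fin d))) ≠ ∞ :=
    liebThirringConst_ne_top _
  refine ⟨_, toReal_pos (liebThirringConst_ne_zero volume) hK, fun u lam hu horth hlam => ?_⟩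
  have hLT := lieb_thirring_countable_general volume
    (fun n => ofReal_le_one.2 (hlam n).2) hu horth
  simp only [particleDensity_ofReal fun n => (hlam n).1, finrank_euclideanSpace_fin] at hLT
  rw [ofReal_toReal hK]
  refine hLT.trans ?_
  gcongr with n x
  exact enorm_fderiv_sq_le_ofReal_gradSq (u n) x
end

section
/- There exists a constant C_d > 0 depending only on the dimension d such that the following holds: for every open ball B ⊂ ℝ^d, every finite family u_1, …, u_N of continuously differentiable functions from ℝ^d to ℂ whose restrictions to B are orthonormal in L²(B), and every choice of coefficients λ_1, …, λ_N ∈ [0,1], if ∫_B ρ(x) dx = 2 where ρ(x) = Σ_{n=1}^N λ_n |u_n(x)|², then Σ_{n=1}^N λ_n ∫_B |∇u_n(x)|² dx ≥ (1/C_d) ∫_B ρ(x)^{1+2/d} dx. -/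
open MeasureTheory
open scoped BigOperators

/-!
For a `C¹` function on a bounded convex set `S` of volume `V` and diameter `D`, integrating the
gradient along segments and dilating towards an endpoint compares the values at `x` and at
`x + t (y - x)`, on average over `x, y ∈ S`, with `(D t)² ∫ |∇f|²`. This is used twice.

At a level `s`, choose `t` such that `ρ` has mean at most `s / 2` over the copy of `S` shrunk by the
factor `t` towards any point of `S`. Around a point with `ρ ≥ 2s`, a smooth truncation of `ρ`
between the levels `s` and `2s` then oscillates at scale `t`, so `|{ρ ≥ 2s}|` is controlled by the
gradient of `ρ` on `{s < ρ < 2s}`. By Cauchy–Schwarz `|∇ρ|² ≤ 4ρτ` with `τ = ∑ λₙ |∇uₙ|²`, and the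
bands of dyadic levels are disjoint, so summing over levels bounds `∫ ρ^(1+2/d)` by
`(m / V)^(2/d) (m + D² ∫ τ)` up to constants, where `m = ∫ ρ`.

At `t = 1 / 2` it gives a Poincaré inequality. By Bessel's inequality the constant functions carry
at most one unit of the mass of an orthonormal family, so `m - 1` is bounded by a multiple of
`D² ∫ τ`, which absorbs the term `m` above.
-/

section Integrability

open Bornology

lemma measureReal_pos_of_setIntegral_pos {α : Type*} [MeasurableSpace α] {μ : Measure α}
    {S : Set α} (hS : μ S ≠ ⊤) {f : α → ℝ} (hf : 0 < ∫ x in S, f x ∂μ) : 0 < μ.real S :=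
  ENNReal.toReal_pos (fun h => hf.ne' (setIntegral_measure_zero f h)) hS

variable {X Y F : Type*} [PseudoMetricSpace X] [ProperSpace X] [MeasurableSpace X]
  [OpensMeasurableSpace X] [PseudoMetricSpace Y] [ProperSpace Y] [MeasurableSpace Y]
  [OpensMeasurableSpace Y] [NormedAddCommGroup F]
  {μ : Measure X} [IsFiniteMeasureOnCompacts μ] {ν : Measure Y} [IsFiniteMeasureOnCompacts ν]
  {S : Set X} {T : Set Y}

lemma integrableOn_of_continuous_of_isBounded {f : X → F} (hf : Continuous f)
    (hS : IsBounded S) : IntegrableOn f S μ :=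
  (hf.locallyIntegrable.integrableOn_isCompact hS.isCompact_closure).mono_set subset_closure

lemma memLp_two_restrict_of_continuous_of_isBounded {f : X → F} (hf : Continuous f)
    (hS : IsBounded S) : MemLp f 2 (μ.restrict S) :=
  (memLp_two_iff_integrable_sq_norm hf.aestronglyMeasurable).2
    (integrableOn_of_continuous_of_isBounded (by fun_prop) hS)

lemma integrable_prod_restrict_of_continuous_of_isBounded {f : X × Y → F} (hf : Continuous f)
    (hS : IsBounded S) (hT : IsBounded T) :
    Integrable f ((μ.restrict S).prod (ν.restrict T)) := by
  rw [Measure.prod_restrict]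
  exact integrableOn_of_continuous_of_isBounded hf (hS.prod hT)

lemma setIntegral_sum_mul_norm_sq {ι : Type*} [Fintype ι] {lam : ι → ℝ} {v : ι → X → F}
    (hv : ∀ n, Continuous (v n)) (hS : IsBounded S) :
    ∫ x in S, ∑ n, lam n * ‖v n x‖ ^ 2 ∂μ = ∑ n, lam n * ∫ x in S, ‖v n x‖ ^ 2 ∂μ := by
  rw [integral_finsetSum _ fun n _ => integrableOn_of_continuous_of_isBounded (by fun_prop) hS]
  simp only [integral_const_mul]

end Integrability

section Segment

open AffineMap Set Metric

variable {E F : Type*} [NormedAddCommGroup E] [NormedSpace ℝ E]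
  [NormedAddCommGroup F] [NormedSpace ℝ F] [CompleteSpace F]

lemma norm_integral_sq_le_integral_norm_sq {α : Type*} [MeasurableSpace α] {μ : Measure α}
    [IsProbabilityMeasure μ] {g : α → F} (hg : MemLp g 2 μ) :
    ‖∫ x, g x ∂μ‖ ^ 2 ≤ ∫ x, ‖g x‖ ^ 2 ∂μ :=
  (convexOn_univ_norm.pow (fun v _ => norm_nonneg v) 2).map_integral_le
    (by fun_prop) isClosed_univ (by simp) (hg.integrable one_le_two)
    (hg.integrable_norm_pow two_ne_zero)

lemma norm_sub_sq_le_integral_norm_fderiv_sq {f : E → F} (hf : ContDiff ℝ 1 f) (x z : E) :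
    ‖f z - f x‖ ^ 2 ≤
      ‖z - x‖ ^ 2 * ∫ s in Ioc (0 : ℝ) 1, ‖fderiv ℝ f (lineMap x z s)‖ ^ 2 := by
  have : Continuous (fderiv ℝ f) := hf.continuous_fderiv one_ne_zero
  have hcont : Continuous fun s : ℝ => fderiv ℝ f (lineMap x z s) (z - x) := by fun_prop
  have hderiv : ∀ s : ℝ, HasDerivAt (fun s : ℝ => f (lineMap x z s))
      (fderiv ℝ f (lineMap x z s) (z - x)) s := fun s =>
    (hf.differentiable one_ne_zero _).hasFDerivAt.comp_hasDerivAt s hasDerivAt_lineMap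
  have hFTC : ∫ s in Ioc (0 : ℝ) 1, fderiv ℝ f (lineMap x z s) (z - x) = f z - f x := by
    rw [← intervalIntegral.integral_of_le zero_le_one]
    simpa using intervalIntegral.integral_eq_sub_of_hasDerivAt (fun s _ => hderiv s)
      (hcont.intervalIntegrable 0 1)
  have hIoc : Bornology.IsBounded (Ioc (0 : ℝ) 1) := Metric.isBounded_Ioc 0 1
  have : IsProbabilityMeasure (volume.restrict (Ioc (0 : ℝ) 1)) := ⟨by simp⟩
  rw [← hFTC, ← integral_const_mul]
  refine (norm_integral_sq_le_integral_norm_sq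
    (memLp_two_restrict_of_continuous_of_isBounded hcont hIoc)).trans (integral_mono
      (integrableOn_of_continuous_of_isBounded (by fun_prop) hIoc)
      (integrableOn_of_continuous_of_isBounded (by fun_prop) hIoc) fun s => ?_)
  dsimp only
  rw [← mul_pow, mul_comm]
  gcongr
  exact ContinuousLinearMap.le_opNorm _ _

lemma norm_sub_lineMap_sq_le {S : Set E} (hS : Bornology.IsBounded S) {f : E → F}
    (hf : ContDiff ℝ 1 f) {x y : E} (hx : x ∈ S) (hy : y ∈ S) {t : ℝ} (ht : 0 ≤ t) :
    ‖f x - f (lineMap x y t)‖ ^ 2 ≤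
      ∫ s in Ioc (0 : ℝ) 1, (diam S * t) ^ 2 * ‖fderiv ℝ f (lineMap x y (s * t))‖ ^ 2 := by
  have hdist : ‖lineMap x y t - x‖ ≤ diam S * t := by
    rw [← dist_eq_norm, dist_lineMap_left, Real.norm_of_nonneg ht, mul_comm]
    gcongr
    exact dist_le_diam_of_mem hS hx hy
  have hseg := norm_sub_sq_le_integral_norm_fderiv_sq hf x (lineMap x y t)
  simp only [lineMap_lineMap_right] at hseg
  rw [norm_sub_rev, integral_const_mul]
  exact hseg.trans (by gcongr)

end Segment

section ConvexBody

open AffineMap Set Metric Module Bornology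

variable {E F : Type*} [NormedAddCommGroup E] [NormedSpace ℝ E] [FiniteDimensional ℝ E]
  [MeasurableSpace E] [BorelSpace E] [NormedAddCommGroup F] [NormedSpace ℝ F]
  {μ : Measure E} [μ.IsAddHaarMeasure] {S : Set E} {x y : E} {t : ℝ}

lemma setIntegral_comp_lineMap_le (hS : Convex ℝ S) {h : E → ℝ} (hh : IntegrableOn h S μ)
    (h_nonneg : ∀ x ∈ S, 0 ≤ h x) (hy : y ∈ S) (ht₀ : 0 ≤ t) (ht₁ : t < 1) :
    ∫ x in S, h (lineMap x y t) ∂μ ≤ ((1 - t) ^ finrank ℝ E)⁻¹ * ∫ x in S, h x ∂μ := by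
  have hSm : NullMeasurableSet S μ := hS.nullMeasurableSet μ
  have h1t : 0 < 1 - t := sub_pos.2 ht₁
  set g : E → ℝ := S.indicator h
  have hg : Integrable g μ := hh.integrable_indicator₀ hSm
  have hg_nonneg : ∀ x, 0 ≤ g x := fun x => indicator_nonneg h_nonneg x
  simp only [lineMap_apply_module]
  calc ∫ x in S, h ((1 - t) • x + t • y) ∂μ
      = ∫ x in S, g ((1 - t) • x + t • y) ∂μ := by
        refine integral_congr_ae ?_
        filter_upwards [ae_restrict_mem₀ hSm] with x hx
        exact (indicator_of_mem (hS hx hy h1t.le ht₀ (by ring)) h).symm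
    _ ≤ ∫ x, g ((1 - t) • x + t • y) ∂μ :=
        setIntegral_le_integral ((hg.comp_add_right (t • y)).comp_smul h1t.ne')
          (.of_forall fun x => hg_nonneg _)
    _ = ((1 - t) ^ finrank ℝ E)⁻¹ * ∫ x in S, h x ∂μ := by
        rw [Measure.integral_comp_smul μ (fun x => g (x + t • y)), integral_add_right_eq_self,
          integral_indicator₀ hSm, abs_of_pos (by positivity), smul_eq_mul]

variable [CompleteSpace F] {f : E → F}

lemma setIntegral_norm_sub_lineMap_sq_le (hS : Convex ℝ S) (hSb : IsBounded S)
    (hf : ContDiff ℝ 1 f) (hy : y ∈ S) (ht₀ : 0 ≤ t) (ht₁ : t < 1) :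
    ∫ x in S, ‖f x - f (lineMap x y t)‖ ^ 2 ∂μ ≤
      (diam S * t) ^ 2 * ((1 - t) ^ finrank ℝ E)⁻¹ * ∫ x in S, ‖fderiv ℝ f x‖ ^ 2 ∂μ := by
  have hfc : Continuous f := hf.continuous
  have : Continuous (fderiv ℝ f) := hf.continuous_fderiv one_ne_zero
  have hint : Integrable
      (fun p : E × ℝ => (diam S * t) ^ 2 * ‖fderiv ℝ f (lineMap p.1 y (p.2 * t))‖ ^ 2)
      ((μ.restrict S).prod (volume.restrict (Ioc 0 1))) :=
    integrable_prod_restrict_of_continuous_of_isBounded (by fun_prop) hSb (Metric.isBounded_Ioc 0 1)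
  calc ∫ x in S, ‖f x - f (lineMap x y t)‖ ^ 2 ∂μ
      ≤ ∫ x in S, (∫ s in Ioc (0 : ℝ) 1,
          (diam S * t) ^ 2 * ‖fderiv ℝ f (lineMap x y (s * t))‖ ^ 2) ∂μ :=
        setIntegral_mono_on₀ (integrableOn_of_continuous_of_isBounded (by fun_prop) hSb)
          hint.integral_prod_left (hS.nullMeasurableSet μ)
          fun x hx => norm_sub_lineMap_sq_le hSb hf hx hy ht₀
    _ = ∫ s in Ioc (0 : ℝ) 1,
          (diam S * t) ^ 2 * ∫ x in S, ‖fderiv ℝ f (lineMap x y (s * t))‖ ^ 2 ∂μ := by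
        rw [integral_integral_swap hint]
        simp only [integral_const_mul]
    _ ≤ ∫ _ in Ioc (0 : ℝ) 1, (diam S * t) ^ 2 *
          (((1 - t) ^ finrank ℝ E)⁻¹ * ∫ x in S, ‖fderiv ℝ f x‖ ^ 2 ∂μ) := by
        refine setIntegral_mono_on ?_ (integrable_const _) measurableSet_Ioc fun s hs => ?_
        · simpa only [IntegrableOn, integral_const_mul] using hint.integral_prod_right
        · have hst : s * t ≤ t := mul_le_of_le_one_left ht₀ hs.2
          have : 0 < 1 - t := sub_pos.2 ht₁
          gcongr
          refine (setIntegral_comp_lineMap_le hS (h := fun x => ‖fderiv ℝ f x‖ ^ 2)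
            (integrableOn_of_continuous_of_isBounded (by fun_prop) hSb) (fun x _ => by positivity)
            hy (mul_nonneg hs.1.le ht₀) (hst.trans_lt ht₁)).trans ?_
          gcongr
    _ = _ := by simp [mul_assoc]

lemma setIntegral_setIntegral_norm_sub_lineMap_sq_le (hS : Convex ℝ S) (hSb : IsBounded S)
    (hf : ContDiff ℝ 1 f) (ht₀ : 0 ≤ t) (ht₁ : t < 1) :
    ∫ y in S, ∫ x in S, ‖f x - f (lineMap x y t)‖ ^ 2 ∂μ ∂μ ≤
      μ.real S * ((diam S * t) ^ 2 * ((1 - t) ^ finrank ℝ E)⁻¹ *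
        ∫ x in S, ‖fderiv ℝ f x‖ ^ 2 ∂μ) := by
  have hfc : Continuous f := hf.continuous
  have hint : Integrable (fun p : E × E => ‖f p.2 - f (lineMap p.2 p.1 t)‖ ^ 2)
      ((μ.restrict S).prod (μ.restrict S)) :=
    integrable_prod_restrict_of_continuous_of_isBounded (by fun_prop) hSb hSb
  refine (setIntegral_mono_on₀ hint.integral_prod_left
    (integrableOn_const hSb.measure_lt_top.ne) (hS.nullMeasurableSet μ)
    fun y hy => setIntegral_norm_sub_lineMap_sq_le hS hSb hf hy ht₀ ht₁).trans_eq ?_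
  rw [setIntegral_const, smul_eq_mul]

theorem setIntegral_setIntegral_norm_sub_sq_le (hS : Convex ℝ S) (hSb : IsBounded S)
    (hf : ContDiff ℝ 1 f) :
    ∫ y in S, ∫ x in S, ‖f x - f y‖ ^ 2 ∂μ ∂μ ≤
      μ.real S * (diam S ^ 2 * 2 ^ finrank ℝ E * ∫ x in S, ‖fderiv ℝ f x‖ ^ 2 ∂μ) := by
  have hfc : Continuous f := hf.continuous
  set G : E × E → ℝ := fun p => ‖f p.2 - f (lineMap p.2 p.1 (1 / 2 : ℝ))‖ ^ 2 with hG
  have hprod {g : E × E → ℝ} (hg : Continuous g) :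
      Integrable g ((μ.restrict S).prod (μ.restrict S)) :=
    integrable_prod_restrict_of_continuous_of_isBounded hg hSb hSb
  have hGc : Continuous G := by fun_prop
  have hpoint (p : E × E) : ‖f p.2 - f p.1‖ ^ 2 ≤ 2 * (G p + G p.swap) := by
    have hmid : lineMap p.1 p.2 (1 / 2 : ℝ) = lineMap p.2 p.1 (1 / 2 : ℝ) := by
      rw [← lineMap_apply_one_sub]
      norm_num
    simp only [hG, Prod.fst_swap, Prod.snd_swap, hmid]
    refine (pow_le_pow_left₀ (norm_nonneg _) ?_ 2).trans add_sq_le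
    rw [norm_sub_rev (f p.1)]
    exact norm_sub_le_norm_sub_add_norm_sub _ _ _
  calc ∫ y in S, ∫ x in S, ‖f x - f y‖ ^ 2 ∂μ ∂μ
      = ∫ p, ‖f p.2 - f p.1‖ ^ 2 ∂(μ.restrict S).prod (μ.restrict S) :=
        integral_integral (f := fun y x => ‖f x - f y‖ ^ 2) (hprod (by fun_prop))
    _ ≤ ∫ p, 2 * (G p + G p.swap) ∂(μ.restrict S).prod (μ.restrict S) :=
        integral_mono (hprod (by fun_prop)) (hprod (by fun_prop)) hpoint
    _ = 4 * ∫ y in S, ∫ x in S, G (y, x) ∂μ ∂μ := by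
        rw [integral_const_mul, integral_add (hprod hGc) (hprod (by fun_prop)),
          integral_prod_swap, integral_prod _ (hprod hGc)]
        ring
    _ ≤ 4 * (μ.real S * ((diam S * (1 / 2)) ^ 2 * ((1 - 1 / 2) ^ finrank ℝ E)⁻¹ *
          ∫ x in S, ‖fderiv ℝ f x‖ ^ 2 ∂μ)) := by
        gcongr
        exact setIntegral_setIntegral_norm_sub_lineMap_sq_le hS hSb hf (by norm_num) (by norm_num)
    _ = _ := by
        rw [← inv_pow]
        norm_num
        ring

end ConvexBody

section Orthonormal

open Set

variable {α : Type*} [MeasurableSpace α] {μ : Measure α}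

lemma integral_integral_norm_sub_sq [IsFiniteMeasure μ] {F : Type*} [NormedAddCommGroup F]
    [InnerProductSpace ℝ F] [CompleteSpace F] {f : α → F} (hf : MemLp f 2 μ) :
    ∫ y, ∫ x, ‖f x - f y‖ ^ 2 ∂μ ∂μ =
      2 * (μ.real univ * ∫ x, ‖f x‖ ^ 2 ∂μ - ‖∫ x, f x ∂μ‖ ^ 2) := by
  have hf₁ : Integrable f μ := hf.integrable one_le_two
  have hf₂ : Integrable (fun x => ‖f x‖ ^ 2) μ := hf.integrable_norm_pow two_ne_zero
  have hcross (v : F) : Integrable (fun x => 2 * inner ℝ v (f x)) μ :=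
    (hf₁.const_inner v).const_mul 2
  have hfiber (y : α) : ∫ x, ‖f x - f y‖ ^ 2 ∂μ =
      μ.real univ * ‖f y‖ ^ 2 - 2 * inner ℝ (∫ x, f x ∂μ) (f y) + ∫ x, ‖f x‖ ^ 2 ∂μ := by
    simp only [norm_sub_rev _ (f y), norm_sub_sq_real]
    rw [integral_add (by fun_prop) hf₂, integral_sub (by fun_prop) (hcross _), integral_const_mul,
      integral_inner hf₁, integral_const, smul_eq_mul, real_inner_comm]
  simp only [hfiber]
  rw [integral_add (by fun_prop) (by fun_prop), integral_sub (by fun_prop) (hcross _),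
    integral_const_mul, integral_const_mul, integral_inner hf₁, real_inner_self_eq_norm_sq,
    integral_const, smul_eq_mul]
  ring

variable {𝕜 ι : Type*} [RCLike 𝕜] [DecidableEq ι] {u : ι → α → 𝕜}

lemma integral_norm_sq_eq_one_of_orthonormal
    (ho : ∀ m n, ∫ x, u m x * starRingEnd 𝕜 (u n x) ∂μ = if m = n then 1 else 0) (n : ι) :
    ∫ x, ‖u n x‖ ^ 2 ∂μ = 1 := by
  have h := ho n n
  rw [if_pos rfl] at h
  simp only [RCLike.mul_conj] at h
  exact_mod_cast h

lemma sum_norm_integral_sq_le_of_orthonormal [Fintype ι] [IsFiniteMeasure μ]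
    (hu : ∀ n, MemLp (u n) 2 μ)
    (ho : ∀ m n, ∫ x, u m x * starRingEnd 𝕜 (u n x) ∂μ = if m = n then 1 else 0) :
    ∑ n, ‖∫ x, u n x ∂μ‖ ^ 2 ≤ μ.real univ := by
  have hU : Orthonormal 𝕜 fun n => (hu n).toLp (u n) := by
    rw [orthonormal_iff_ite]
    intro m n
    simp only [@eq_comm _ m n, ← ho n m, L2.inner_def, RCLike.inner_apply]
    refine integral_congr_ae ?_
    filter_upwards [(hu m).coeFn_toLp, (hu n).coeFn_toLp] with x hm hn
    rw [hm, hn]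
  let one : Lp 𝕜 2 μ := indicatorConstLp 2 MeasurableSet.univ (measure_ne_top μ univ) 1
  have hone : ‖one‖ ^ 2 = μ.real univ := by
    rw [norm_indicatorConstLp two_ne_zero ENNReal.ofNat_ne_top, norm_one, one_mul,
      ENNReal.toReal_ofNat, ← Real.sqrt_eq_rpow, Real.sq_sqrt measureReal_nonneg]
  have hinner (n : ι) : ‖inner 𝕜 ((hu n).toLp (u n)) one‖ = ‖∫ x, u n x ∂μ‖ := by
    rw [norm_inner_symm, L2.inner_indicatorConstLp_one, setIntegral_univ,
      integral_congr_ae (hu n).coeFn_toLp]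
  simpa only [hinner, hone] using hU.sum_inner_products_le (s := Finset.univ) one

end Orthonormal

section KineticEnergy

open Metric Module Bornology

variable {E : Type*} [NormedAddCommGroup E] [NormedSpace ℝ E] [FiniteDimensional ℝ E]
  [MeasurableSpace E] [BorelSpace E] {μ : Measure E} [μ.IsAddHaarMeasure] {S : Set E}
  {ι : Type*} [Fintype ι] [DecidableEq ι] {u : ι → E → ℂ} {lam : ι → ℝ}

theorem two_mul_sum_sub_one_le_sum_integral_norm_fderiv_sq (hS : Convex ℝ S)
    (hSb : IsBounded S) (hV : 0 < μ.real S) (hu : ∀ n, ContDiff ℝ 1 (u n))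
    (ho : ∀ m n, ∫ x in S, u m x * starRingEnd ℂ (u n x) ∂μ = if m = n then 1 else 0)
    (hlam : ∀ n, 0 ≤ lam n ∧ lam n ≤ 1) :
    2 * (∑ n, lam n - 1) ≤ diam S ^ 2 * 2 ^ finrank ℝ E *
      ∑ n, lam n * ∫ x in S, ‖fderiv ℝ (u n) x‖ ^ 2 ∂μ := by
  have : IsFiniteMeasure (μ.restrict S) := ⟨by simpa using hSb.measure_lt_top⟩
  have huL (n : ι) : MemLp (u n) 2 (μ.restrict S) :=
    memLp_two_restrict_of_continuous_of_isBounded (hu n).continuous hSb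
  have hPoincare (n : ι) : 2 * (μ.real S - ‖∫ x in S, u n x ∂μ‖ ^ 2) ≤
      μ.real S * (diam S ^ 2 * 2 ^ finrank ℝ E * ∫ x in S, ‖fderiv ℝ (u n) x‖ ^ 2 ∂μ) := by
    have h := setIntegral_setIntegral_norm_sub_sq_le (μ := μ) hS hSb (hu n)
    rwa [integral_integral_norm_sub_sq (huL n), integral_norm_sq_eq_one_of_orthonormal ho,
      measureReal_restrict_apply_univ, mul_one] at h
  have hBessel : ∑ n, lam n * ‖∫ x in S, u n x ∂μ‖ ^ 2 ≤ μ.real S := by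
    have h := sum_norm_integral_sq_le_of_orthonormal huL ho
    rw [measureReal_restrict_apply_univ] at h
    exact (Finset.sum_le_sum fun n _ =>
      mul_le_of_le_one_left (by positivity) (hlam n).2).trans h
  refine le_of_mul_le_mul_left ?_ hV
  calc μ.real S * (2 * (∑ n, lam n - 1))
      ≤ 2 * (μ.real S * ∑ n, lam n - ∑ n, lam n * ‖∫ x in S, u n x ∂μ‖ ^ 2) := by
        linarith
    _ = ∑ n, lam n * (2 * (μ.real S - ‖∫ x in S, u n x ∂μ‖ ^ 2)) := by
        rw [Finset.mul_sum, ← Finset.sum_sub_distrib, Finset.mul_sum]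
        exact Finset.sum_congr rfl fun n _ => by ring
    _ ≤ ∑ n, lam n * (μ.real S *
          (diam S ^ 2 * 2 ^ finrank ℝ E * ∫ x in S, ‖fderiv ℝ (u n) x‖ ^ 2 ∂μ)) :=
        Finset.sum_le_sum fun n _ => mul_le_mul_of_nonneg_left (hPoincare n) (hlam n).1
    _ = _ := by
        simp only [Finset.mul_sum]
        exact Finset.sum_congr rfl fun n _ => by ring

end KineticEnergy

section LevelCutoff

open Real Set

/-- The largest slope of `Real.smoothTransition`, the constant in the gradient bound for the
cutoffs `levelCutoff`. -/
noncomputable def smoothTransitionSlope : ℝ := ⨆ x, |deriv smoothTransition x|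

lemma deriv_smoothTransition_eq_zero {x : ℝ} (hx : x ∉ Ioo 0 1) :
    deriv smoothTransition x = 0 := by
  rcases le_or_gt x 0 with h₀ | h₀
  · refine IsLocalMin.deriv_eq_zero (.of_forall fun y => ?_)
    rw [smoothTransition.zero_of_nonpos h₀]
    exact smoothTransition.nonneg y
  · refine IsLocalMax.deriv_eq_zero (.of_forall fun y => ?_)
    rw [smoothTransition.one_of_one_le (not_lt.1 fun h₁ => hx ⟨h₀, h₁⟩)]
    exact smoothTransition.le_one y

lemma abs_deriv_smoothTransition_le (x : ℝ) :
    |deriv smoothTransition x| ≤ smoothTransitionSlope := by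
  have hsupp : HasCompactSupport (deriv smoothTransition) :=
    .intro' isCompact_Icc isClosed_Icc fun y (hy : y ∉ Icc 0 1) =>
      deriv_smoothTransition_eq_zero fun h => hy (Ioo_subset_Icc_self h)
  obtain ⟨B, hB⟩ := hsupp.exists_bound_of_continuous
    (smoothTransition.contDiff.continuous_deriv le_rfl)
  exact le_ciSup (f := fun x => |deriv smoothTransition x|) ⟨B, forall_mem_range.2 hB⟩ x

variable {E : Type*} {s : ℝ} {ρ : E → ℝ} {x : E}

/-- The smooth truncation of `ρ` between the levels `s` and `2 * s`, where it goes from `0`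
to `1`. -/
noncomputable def levelCutoff (s : ℝ) (ρ : E → ℝ) (x : E) : ℝ := smoothTransition (ρ x / s - 1)

lemma levelCutoff_eq_one (hs : 0 < s) (hx : 2 * s ≤ ρ x) : levelCutoff s ρ x = 1 := by
  refine smoothTransition.one_of_one_le ?_
  rw [le_sub_iff_add_le, le_div_iff₀ hs]
  linarith

lemma levelCutoff_eq_zero (hs : 0 < s) (hx : ρ x ≤ s) : levelCutoff s ρ x = 0 :=
  smoothTransition.zero_of_nonpos (sub_nonpos.2 ((div_le_one hs).2 hx))

lemma one_sub_div_le_norm_one_sub_levelCutoff_sq (hs : 0 < s) (hx : 0 ≤ ρ x) :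
    1 - ρ x / s ≤ ‖1 - levelCutoff s ρ x‖ ^ 2 := by
  rcases le_total (ρ x) s with h | h
  · rw [levelCutoff_eq_zero hs h]
    simpa using div_nonneg hx hs.le
  · exact (sub_nonpos.2 ((one_le_div hs).2 h)).trans (by positivity)

variable [NormedAddCommGroup E] [NormedSpace ℝ E]

lemma contDiff_levelCutoff (hρ : ContDiff ℝ 1 ρ) : ContDiff ℝ 1 (levelCutoff s ρ) :=
  smoothTransition.contDiff.comp ((hρ.div_const s).sub contDiff_const)

lemma norm_fderiv_levelCutoff_sq_le (hs : 0 < s) (hρ : DifferentiableAt ℝ ρ x) {τ : E → ℝ}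
    (hτ : 0 ≤ τ x) (hgrad : ‖fderiv ℝ ρ x‖ ^ 2 ≤ 4 * ρ x * τ x) :
    ‖fderiv ℝ (levelCutoff s ρ) x‖ ^ 2 ≤
      8 * smoothTransitionSlope ^ 2 / s * (ρ ⁻¹' Ioo s (2 * s)).indicator τ x := by
  have hchain : fderiv ℝ (levelCutoff s ρ) x =
      deriv smoothTransition (ρ x / s - 1) • s⁻¹ • fderiv ℝ ρ x :=
    (((smoothTransition.contDiff (n := 1)).differentiable
      one_ne_zero _).hasDerivAt.comp_hasFDerivAt x
        ((hρ.hasFDerivAt.mul_const s⁻¹).sub_const 1)).fderiv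
  by_cases hx : ρ x ∈ Ioo s (2 * s)
  · rw [hchain, indicator_of_mem (show x ∈ ρ ⁻¹' Ioo s (2 * s) from hx)]
    simp only [norm_smul, mul_pow, Real.norm_eq_abs]
    calc |deriv smoothTransition (ρ x / s - 1)| ^ 2 * (|s⁻¹| ^ 2 * ‖fderiv ℝ ρ x‖ ^ 2)
        ≤ smoothTransitionSlope ^ 2 * ((s⁻¹) ^ 2 * (4 * (2 * s) * τ x)) := by
          rw [sq_abs s⁻¹]
          gcongr
          · exact abs_deriv_smoothTransition_le _
          · exact hgrad.trans (by gcongr; exact hx.2.le)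
      _ = _ := by
          field_simp
          ring
  · have hd : deriv smoothTransition (ρ x / s - 1) = 0 :=
      deriv_smoothTransition_eq_zero fun h => hx <| by
        rw [mem_Ioo, sub_pos, sub_lt_iff_lt_add, one_lt_div hs, div_lt_iff₀ hs] at h
        exact ⟨h.1, by linarith [h.2]⟩
    rw [hchain, hd, indicator_of_notMem (show x ∉ ρ ⁻¹' Ioo s (2 * s) from hx)]
    simp

end LevelCutoff

section WeakType

open AffineMap Set Metric Module Bornology

variable {E : Type*} [NormedAddCommGroup E] [NormedSpace ℝ E] [FiniteDimensional ℝ E]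
  [MeasurableSpace E] [BorelSpace E] {μ : Measure E} [μ.IsAddHaarMeasure] {S : Set E}
  {ρ τ : E → ℝ} {s t : ℝ}

/- The copy of `S` shrunk towards `x` by the factor `t` has measure `t ^ d * μ S`, so `ρ` has mean
at most `s / 2` over it. -/
lemma half_measureReal_le_setIntegral_norm_levelCutoff_sub_sq (hS : Convex ℝ S)
    (hSb : IsBounded S) (hρ : ContDiff ℝ 1 ρ) (hρ₀ : ∀ x, 0 ≤ ρ x) (hs : 0 < s) (ht₀ : 0 < t)
    (ht₁ : t ≤ 1) (hst : 2 * ∫ x in S, ρ x ∂μ ≤ s * t ^ finrank ℝ E * μ.real S) {x : E}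
    (hx : x ∈ S) (hxs : 2 * s ≤ ρ x) :
    μ.real S / 2 ≤
      ∫ y in S, ‖levelCutoff s ρ x - levelCutoff s ρ (lineMap x y t)‖ ^ 2 ∂μ := by
  have hρc : Continuous ρ := hρ.continuous
  have hwc : Continuous (levelCutoff s ρ) := (contDiff_levelCutoff hρ).continuous
  have hshrink : ∫ y in S, ρ (lineMap x y t) ∂μ ≤
      (t ^ finrank ℝ E)⁻¹ * ∫ x in S, ρ x ∂μ := by
    simpa only [lineMap_apply_one_sub, sub_sub_cancel] using
      setIntegral_comp_lineMap_le hS (integrableOn_of_continuous_of_isBounded hρc hSb)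
        (fun x _ => hρ₀ x) hx (sub_nonneg.2 ht₁) (sub_lt_self 1 ht₀)
  have hint {g : E → ℝ} (hg : Continuous g) : IntegrableOn g S μ :=
    integrableOn_of_continuous_of_isBounded hg hSb
  calc μ.real S / 2
      ≤ μ.real S - (∫ y in S, ρ (lineMap x y t) ∂μ) / s := by
        rw [le_sub_comm, div_le_iff₀ hs]
        refine hshrink.trans ?_
        rw [inv_mul_le_iff₀ (by positivity)]
        linarith
    _ = ∫ y in S, (1 - ρ (lineMap x y t) / s) ∂μ := by
        rw [integral_sub (hint continuous_const) (hint (by fun_prop)), setIntegral_const,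
          integral_div, smul_eq_mul, mul_one]
    _ ≤ _ := by
        rw [levelCutoff_eq_one hs hxs]
        exact integral_mono (hint (by fun_prop)) (hint (by fun_prop))
          fun y => one_sub_div_le_norm_one_sub_levelCutoff_sq hs (hρ₀ _)

lemma measureReal_superlevel_mul_half_le (hS : Convex ℝ S) (hSb : IsBounded S)
    (hρ : ContDiff ℝ 1 ρ) (hρ₀ : ∀ x, 0 ≤ ρ x) (hs : 0 < s) (ht₀ : 0 < t) (ht₁ : t ≤ 1)
    (hst : 2 * ∫ x in S, ρ x ∂μ ≤ s * t ^ finrank ℝ E * μ.real S) :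
    (μ.restrict S).real {x | 2 * s ≤ ρ x} * (μ.real S / 2) ≤
      ∫ x in S, ∫ y in S, ‖levelCutoff s ρ x - levelCutoff s ρ (lineMap x y t)‖ ^ 2 ∂μ ∂μ := by
  have hlevel : MeasurableSet {x | 2 * s ≤ ρ x} :=
    measurableSet_le measurable_const hρ.continuous.measurable
  have hwc : Continuous (levelCutoff s ρ) := (contDiff_levelCutoff hρ).continuous
  have hint : Integrable
      (fun p : E × E => ‖levelCutoff s ρ p.1 - levelCutoff s ρ (lineMap p.1 p.2 t)‖ ^ 2)
      ((μ.restrict S).prod (μ.restrict S)) :=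
    integrable_prod_restrict_of_continuous_of_isBounded (by fun_prop) hSb hSb
  rw [← smul_eq_mul, ← integral_indicator_const _ hlevel]
  refine setIntegral_mono_on₀ ((integrableOn_const hSb.measure_lt_top.ne).indicator hlevel)
    hint.integral_prod_left (hS.nullMeasurableSet μ) fun x hx => indicator_apply_le' ?_ ?_
  · exact half_measureReal_le_setIntegral_norm_levelCutoff_sub_sq hS hSb hρ hρ₀ hs ht₀ ht₁ hst hx
  · exact fun _ => by positivity

lemma setIntegral_norm_fderiv_levelCutoff_sq_le (hSb : IsBounded S) (hρ : ContDiff ℝ 1 ρ)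
    (hτ : Continuous τ) (hτ₀ : ∀ x, 0 ≤ τ x)
    (hgrad : ∀ x, ‖fderiv ℝ ρ x‖ ^ 2 ≤ 4 * ρ x * τ x) (hs : 0 < s) :
    ∫ x in S, ‖fderiv ℝ (levelCutoff s ρ) x‖ ^ 2 ∂μ ≤
      8 * smoothTransitionSlope ^ 2 / s *
        ∫ x in S, (ρ ⁻¹' Ioo s (2 * s)).indicator τ x ∂μ := by
  have hw : Continuous (fderiv ℝ (levelCutoff s ρ)) :=
    (contDiff_levelCutoff hρ).continuous_fderiv one_ne_zero
  have hband : MeasurableSet (ρ ⁻¹' Ioo s (2 * s)) := hρ.continuous.measurable measurableSet_Ioo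
  rw [← integral_const_mul]
  exact integral_mono (integrableOn_of_continuous_of_isBounded (by fun_prop) hSb)
    (((integrableOn_of_continuous_of_isBounded hτ hSb).indicator hband).const_mul _)
    fun x => norm_fderiv_levelCutoff_sq_le hs (hρ.differentiable one_ne_zero x) (hτ₀ x) (hgrad x)

lemma measureReal_superlevel_le (hS : Convex ℝ S) (hSb : IsBounded S) (hV : 0 < μ.real S)
    (hρ : ContDiff ℝ 1 ρ) (hρ₀ : ∀ x, 0 ≤ ρ x) (hτ : Continuous τ) (hτ₀ : ∀ x, 0 ≤ τ x)
    (hgrad : ∀ x, ‖fderiv ℝ ρ x‖ ^ 2 ≤ 4 * ρ x * τ x) (hs : 0 < s) (ht₀ : 0 < t)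
    (ht₁ : t ≤ 1 / 2) (hst : 2 * ∫ x in S, ρ x ∂μ ≤ s * t ^ finrank ℝ E * μ.real S) :
    (μ.restrict S).real {x | 2 * s ≤ ρ x} ≤
      16 * 2 ^ finrank ℝ E * smoothTransitionSlope ^ 2 * (diam S * t) ^ 2 / s *
        ∫ x in S, (ρ ⁻¹' Ioo s (2 * s)).indicator τ x ∂μ := by
  set w := levelCutoff s ρ
  set J := ∫ x in S, (ρ ⁻¹' Ioo s (2 * s)).indicator τ x ∂μ
  have hw : ContDiff ℝ 1 w := contDiff_levelCutoff hρ
  have hwc : Continuous w := hw.continuous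
  have hint : Integrable (fun p : E × E => ‖w p.1 - w (lineMap p.1 p.2 t)‖ ^ 2)
      ((μ.restrict S).prod (μ.restrict S)) :=
    integrable_prod_restrict_of_continuous_of_isBounded (by fun_prop) hSb hSb
  have hinv : ((1 - t) ^ finrank ℝ E)⁻¹ ≤ 2 ^ finrank ℝ E := by
    rw [← inv_pow]
    have h1t : 0 < 1 - t := by linarith
    gcongr
    rw [inv_le_comm₀ h1t two_pos]
    linarith
  refine le_of_mul_le_mul_right ((measureReal_superlevel_mul_half_le hS hSb hρ hρ₀ hs ht₀
    (by linarith) hst).trans ?_) (half_pos hV)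
  rw [integral_integral_swap hint]
  calc ∫ y in S, ∫ x in S, ‖w x - w (lineMap x y t)‖ ^ 2 ∂μ ∂μ
      ≤ μ.real S * ((diam S * t) ^ 2 * ((1 - t) ^ finrank ℝ E)⁻¹ *
          ∫ x in S, ‖fderiv ℝ w x‖ ^ 2 ∂μ) :=
        setIntegral_setIntegral_norm_sub_lineMap_sq_le hS hSb hw ht₀.le (by linarith)
    _ ≤ μ.real S * ((diam S * t) ^ 2 * 2 ^ finrank ℝ E *
          (8 * smoothTransitionSlope ^ 2 / s * J)) := by
        gcongr
        exact setIntegral_norm_fderiv_levelCutoff_sq_le hSb hρ hτ hτ₀ hgrad hs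
    _ = _ := by ring

lemma exists_pow_eq_and_rpow_mul_sq_eq {d : ℕ} (hd : d ≠ 0) {m V s : ℝ} (hm : 0 < m)
    (hV : 0 < V) (hs : 2 * 2 ^ d * m / V ≤ s) :
    ∃ t : ℝ, 0 < t ∧ t ≤ 1 / 2 ∧ t ^ d = 2 * m / (s * V) ∧
      (4 * s) ^ (1 + 2 / (d : ℝ)) * t ^ 2 = 4 * s * (8 * m / V) ^ (2 / (d : ℝ)) := by
  have hs₀ : 0 < s := lt_of_lt_of_le (by positivity) hs
  set a : ℝ := 2 * m / (s * V) with ha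
  have ha₀ : 0 < a := by positivity
  have ha₁ : a ≤ (1 / 2) ^ d := by
    rw [div_le_iff₀ hV] at hs
    rw [ha, div_le_iff₀ (by positivity), one_div, inv_pow, le_inv_mul_iff₀ (by positivity)]
    linarith
  have hpow : (a ^ (d⁻¹ : ℝ)) ^ d = a := Real.rpow_inv_natCast_pow ha₀.le hd
  have hsq : (a ^ (d⁻¹ : ℝ)) ^ 2 = a ^ (2 / (d : ℝ)) := by
    rw [← Real.rpow_mul_natCast ha₀.le, Nat.cast_ofNat, inv_mul_eq_div]
  refine ⟨a ^ (d⁻¹ : ℝ), by positivity, ?_, hpow, ?_⟩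
  · exact (pow_le_pow_iff_left₀ (by positivity) (by norm_num) hd).1 (hpow.trans_le ha₁)
  · rw [hsq, Real.rpow_add (by positivity), Real.rpow_one, mul_assoc,
      ← Real.mul_rpow (by positivity) ha₀.le, ha]
    congr 2
    field_simp
    norm_num

lemma rpow_mul_measureReal_superlevel_le [Nontrivial E] (hS : Convex ℝ S) (hSb : IsBounded S)
    (hρ : ContDiff ℝ 1 ρ) (hρ₀ : ∀ x, 0 ≤ ρ x) (hm : 0 < ∫ x in S, ρ x ∂μ)
    (hτ : Continuous τ) (hτ₀ : ∀ x, 0 ≤ τ x)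
    (hgrad : ∀ x, ‖fderiv ℝ ρ x‖ ^ 2 ≤ 4 * ρ x * τ x)
    (hs : 2 * 2 ^ finrank ℝ E * (∫ x in S, ρ x ∂μ) / μ.real S ≤ s) :
    (4 * s) ^ (1 + 2 / (finrank ℝ E : ℝ)) * (μ.restrict S).real {x | 2 * s ≤ ρ x} ≤
      64 * 2 ^ finrank ℝ E * smoothTransitionSlope ^ 2 * diam S ^ 2 *
        (8 * (∫ x in S, ρ x ∂μ) / μ.real S) ^ (2 / (finrank ℝ E : ℝ)) *
        ∫ x in S, (ρ ⁻¹' Ioo s (2 * s)).indicator τ x ∂μ := by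
  have hV : 0 < μ.real S := measureReal_pos_of_setIntegral_pos hSb.measure_lt_top.ne hm
  set m := ∫ x in S, ρ x ∂μ
  set V := μ.real S
  set d := finrank ℝ E
  set q : ℝ := 2 / d
  have hs₀ : 0 < s := lt_of_lt_of_le (by positivity) hs
  obtain ⟨t, ht₀, ht₁, htd, hscale⟩ :=
    exists_pow_eq_and_rpow_mul_sq_eq finrank_pos.ne' hm hV hs
  have hst : 2 * m ≤ s * t ^ d * V := by
    rw [htd]
    exact le_of_eq (by field_simp)
  calc (4 * s) ^ (1 + q) * (μ.restrict S).real {x | 2 * s ≤ ρ x}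
      ≤ (4 * s) ^ (1 + q) * (16 * 2 ^ d * smoothTransitionSlope ^ 2 * (diam S * t) ^ 2 / s *
          ∫ x in S, (ρ ⁻¹' Ioo s (2 * s)).indicator τ x ∂μ) := by
        gcongr
        exact measureReal_superlevel_le hS hSb hV hρ hρ₀ hτ hτ₀ hgrad hs₀ ht₀ ht₁ hst
    _ = (4 * s) ^ (1 + q) * t ^ 2 * (16 * 2 ^ d * smoothTransitionSlope ^ 2 * diam S ^ 2 / s *
          ∫ x in S, (ρ ⁻¹' Ioo s (2 * s)).indicator τ x ∂μ) := by ring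
    _ = _ := by
        rw [hscale]
        field_simp
        ring

end WeakType

section DyadicLayers

open Set Finset

lemma rpow_one_add_le_add_sum_dyadic {M a q : ℝ} {K : ℕ} (hM : 0 < M) (hq : 0 ≤ q) (ha₀ : 0 ≤ a)
    (haK : a < 2 ^ K * (2 * M)) :
    a ^ (1 + q) ≤ (2 * M) ^ q * a + ∑ k ∈ range K,
      (Ici (2 * (2 ^ k * M))).indicator (fun _ => (4 * (2 ^ k * M)) ^ (1 + q)) a := by
  have hterm : ∀ k ∈ range K, 0 ≤
      (Ici (2 * (2 ^ k * M))).indicator (fun _ => (4 * (2 ^ k * M)) ^ (1 + q)) a := fun k _ =>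
    indicator_nonneg (fun _ _ => by positivity) _
  rcases le_or_gt a (2 * M) with h | h
  · calc a ^ (1 + q) = a ^ q * a := by
          rw [add_comm, Real.rpow_add_one' ha₀ (by positivity)]
      _ ≤ (2 * M) ^ q * a := by gcongr
      _ ≤ _ := le_add_of_nonneg_right (sum_nonneg hterm)
  · obtain ⟨n, hn₁, hn₂⟩ :=
      exists_nat_pow_near ((one_le_div (by positivity)).2 h.le) (one_lt_two (α := ℝ))
    rw [le_div_iff₀ (by positivity)] at hn₁
    rw [div_lt_iff₀ (by positivity)] at hn₂
    have hnK : n ∈ range K := Finset.mem_range.2 <| (pow_lt_pow_iff_right₀ one_lt_two).1 <|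
      lt_of_mul_lt_mul_right (hn₁.trans_lt haK) (by positivity : 0 ≤ 2 * M)
    have hna : 2 * (2 ^ n * M) ≤ a := by linarith
    calc a ^ (1 + q) ≤ (4 * (2 ^ n * M)) ^ (1 + q) := by
          gcongr
          exact hn₂.le.trans_eq (by ring)
      _ = (Ici (2 * (2 ^ n * M))).indicator (fun _ => (4 * (2 ^ n * M)) ^ (1 + q)) a :=
          (indicator_of_mem (Set.mem_Ici.2 hna) fun _ => (4 * (2 ^ n * M)) ^ (1 + q)).symm
      _ ≤ _ := (single_le_sum hterm hnK).trans (le_add_of_nonneg_left (by positivity))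

lemma sum_indicator_dyadic_le {α : Type*} {ρ τ : α → ℝ} {M : ℝ} (hM : 0 ≤ M) (K : ℕ) {x : α}
    (hτ : 0 ≤ τ x) :
    ∑ k ∈ range K, (ρ ⁻¹' Ioo (2 ^ k * M) (2 * (2 ^ k * M))).indicator τ x ≤ τ x := by
  have hmono : Monotone fun k : ℕ => 2 ^ k * M := fun i j hij => by
    dsimp only
    gcongr
    exact one_le_two
  have hdisj : Pairwise (Function.onFun Disjoint
      fun k : ℕ => ρ ⁻¹' Ioo (2 ^ k * M) (2 * (2 ^ k * M))) := fun i j hij => by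
    have h := hmono.pairwise_disjoint_on_Ioo_succ hij
    simp only [Function.onFun, Nat.succ_eq_succ, pow_succ'] at h ⊢
    exact (by simpa only [mul_assoc] using h : Disjoint _ _).preimage ρ
  rw [← Finset.indicator_biUnion_apply _ _ fun i _ j _ hij => hdisj hij]
  exact indicator_le_self' (fun _ _ => hτ) x

end DyadicLayers

section GagliardoNirenberg

open Set Metric Module Bornology

variable {E : Type*} [NormedAddCommGroup E] [NormedSpace ℝ E] [FiniteDimensional ℝ E]
  [MeasurableSpace E] [BorelSpace E] {μ : Measure E} [μ.IsAddHaarMeasure] {S : Set E}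
  {ρ τ : E → ℝ}

lemma exists_forall_lt_two_pow_mul {X : Type*} [PseudoMetricSpace X] [ProperSpace X] {S : Set X}
    (hS : IsBounded S) {f : X → ℝ} (hf : Continuous f) {c : ℝ} (hc : 0 < c) :
    ∃ K : ℕ, ∀ x ∈ S, f x < 2 ^ K * c := by
  obtain ⟨R, hR⟩ := hS.isCompact_closure.bddAbove_image hf.continuousOn
  obtain ⟨K, hK⟩ := pow_unbounded_of_one_lt (R / c) (one_lt_two (α := ℝ))
  exact ⟨K, fun x hx =>
    (hR (mem_image_of_mem f (subset_closure hx))).trans_lt ((div_lt_iff₀ hc).1 hK)⟩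

lemma setIntegral_rpow_one_add_le_add_sum_dyadic {M q : ℝ} {K : ℕ} (hSb : IsBounded S)
    (hSm : NullMeasurableSet S μ) (hρ : Continuous ρ) (hρ₀ : ∀ x, 0 ≤ ρ x) (hM : 0 < M)
    (hq : 0 ≤ q) (hK : ∀ x ∈ S, ρ x < 2 ^ K * (2 * M)) :
    ∫ x in S, ρ x ^ (1 + q) ∂μ ≤ (2 * M) ^ q * ∫ x in S, ρ x ∂μ +
      ∑ k ∈ Finset.range K,
        (4 * (2 ^ k * M)) ^ (1 + q) * (μ.restrict S).real {x | 2 * (2 ^ k * M) ≤ ρ x} := by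
  have hlevel (s : ℝ) : MeasurableSet {x | s ≤ ρ x} :=
    measurableSet_le measurable_const hρ.measurable
  have hind (s c : ℝ) : IntegrableOn ({x | s ≤ ρ x}.indicator fun _ => c) S μ :=
    (integrableOn_const hSb.measure_lt_top.ne).indicator (hlevel s)
  have hint {g : E → ℝ} (hg : Continuous g) : IntegrableOn g S μ :=
    integrableOn_of_continuous_of_isBounded hg hSb
  have hsum := integrable_finsetSum (Finset.range K) fun k _ =>
    hind (2 * (2 ^ k * M)) ((4 * (2 ^ k * M)) ^ (1 + q))
  calc ∫ x in S, ρ x ^ (1 + q) ∂μ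
      ≤ ∫ x in S, ((2 * M) ^ q * ρ x + ∑ k ∈ Finset.range K,
          {x | 2 * (2 ^ k * M) ≤ ρ x}.indicator (fun _ => (4 * (2 ^ k * M)) ^ (1 + q)) x) ∂μ :=
        setIntegral_mono_on₀ (hint (hρ.rpow_const fun _ => .inr (by positivity)))
          ((hint (hρ.const_mul _)).add hsum) hSm
          fun x hx => rpow_one_add_le_add_sum_dyadic hM hq (hρ₀ x) (hK x hx)
    _ = _ := by
        rw [integral_add (hint (hρ.const_mul _)) hsum, integral_const_mul,
          integral_finsetSum _ fun k _ => hind _ _]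
        simp only [integral_indicator_const _ (hlevel _), smul_eq_mul, mul_comm]

lemma sum_setIntegral_indicator_dyadic_le {M : ℝ} (hSb : IsBounded S) (hρ : Continuous ρ)
    (hτ : Continuous τ) (hτ₀ : ∀ x, 0 ≤ τ x) (hM : 0 ≤ M) (K : ℕ) :
    ∑ k ∈ Finset.range K, ∫ x in S, (ρ ⁻¹' Ioo (2 ^ k * M) (2 * (2 ^ k * M))).indicator τ x ∂μ ≤
      ∫ x in S, τ x ∂μ := by
  have hτS : IntegrableOn τ S μ := integrableOn_of_continuous_of_isBounded hτ hSb
  have hband : ∀ k ∈ Finset.range K,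
      IntegrableOn ((ρ ⁻¹' Ioo (2 ^ k * M) (2 * (2 ^ k * M))).indicator τ) S μ := fun k _ =>
    hτS.indicator (hρ.measurable measurableSet_Ioo)
  rw [← integral_finsetSum _ hband]
  exact integral_mono (integrable_finsetSum _ hband) hτS
    fun x => sum_indicator_dyadic_le hM K (hτ₀ x)

theorem setIntegral_rpow_one_add_two_div_finrank_le [Nontrivial E] (hS : Convex ℝ S)
    (hSb : IsBounded S) (hρ : ContDiff ℝ 1 ρ) (hρ₀ : ∀ x, 0 ≤ ρ x) (hm : 0 < ∫ x in S, ρ x ∂μ)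
    (hτ : Continuous τ) (hτ₀ : ∀ x, 0 ≤ τ x)
    (hgrad : ∀ x, ‖fderiv ℝ ρ x‖ ^ 2 ≤ 4 * ρ x * τ x) :
    ∫ x in S, ρ x ^ (1 + 2 / (finrank ℝ E : ℝ)) ∂μ ≤
      (4 * 2 ^ finrank ℝ E * (∫ x in S, ρ x ∂μ) / μ.real S) ^ (2 / (finrank ℝ E : ℝ)) *
        (∫ x in S, ρ x ∂μ + 64 * 2 ^ finrank ℝ E * smoothTransitionSlope ^ 2 * diam S ^ 2 *
          ∫ x in S, τ x ∂μ) := by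
  have hV : 0 < μ.real S := measureReal_pos_of_setIntegral_pos hSb.measure_lt_top.ne hm
  set m := ∫ x in S, ρ x ∂μ
  set V := μ.real S
  set d := finrank ℝ E
  set q : ℝ := 2 / d
  set A := 64 * 2 ^ d * smoothTransitionSlope ^ 2 * diam S ^ 2
  set M : ℝ := 2 * 2 ^ d * m / V with hM
  set J : ℕ → ℝ := fun k => ∫ x in S, (ρ ⁻¹' Ioo (2 ^ k * M) (2 * (2 ^ k * M))).indicator τ x ∂μ
  have hM₀ : 0 < M := by positivity
  obtain ⟨K, hρK⟩ := exists_forall_lt_two_pow_mul hSb hρ.continuous (mul_pos two_pos hM₀)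
  have hlayer (k : ℕ) : (4 * (2 ^ k * M)) ^ (1 + q) *
      (μ.restrict S).real {x | 2 * (2 ^ k * M) ≤ ρ x} ≤ A * (8 * m / V) ^ q * J k :=
    rpow_mul_measureReal_superlevel_le hS hSb hρ hρ₀ hm hτ hτ₀ hgrad
      (le_mul_of_one_le_left hM₀.le (one_le_pow₀ one_le_two))
  have h8 : (8 * m / V) ^ q ≤ (4 * 2 ^ d * m / V) ^ q := by
    have : (2 : ℝ) ≤ 2 ^ d := le_self_pow₀ one_le_two finrank_pos.ne'
    gcongr
    linarith
  calc ∫ x in S, ρ x ^ (1 + q) ∂μ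
      ≤ (2 * M) ^ q * m + ∑ k ∈ Finset.range K, A * (8 * m / V) ^ q * J k :=
        (setIntegral_rpow_one_add_le_add_sum_dyadic hSb (hS.nullMeasurableSet μ) hρ.continuous
          hρ₀ hM₀ (by positivity) hρK).trans
          (add_le_add_right (Finset.sum_le_sum fun k _ => hlayer k) _)
    _ ≤ (2 * M) ^ q * m + A * (8 * m / V) ^ q * ∫ x in S, τ x ∂μ := by
        rw [← Finset.mul_sum]
        gcongr
        exact sum_setIntegral_indicator_dyadic_le hSb hρ.continuous hτ hτ₀ hM₀.le K
    _ ≤ (4 * 2 ^ d * m / V) ^ q * m + A * (4 * 2 ^ d * m / V) ^ q * ∫ x in S, τ x ∂μ := by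
        rw [show 2 * M = 4 * 2 ^ d * m / V by rw [hM]; ring]
        have hτ_int : 0 ≤ ∫ x in S, τ x ∂μ := integral_nonneg hτ₀
        gcongr
    _ = _ := by ring

end GagliardoNirenberg

section Density

variable {E F ι : Type*} [NormedAddCommGroup E] [NormedSpace ℝ E] [NormedAddCommGroup F]
  [InnerProductSpace ℝ F] [Fintype ι] {u : ι → E → F} {lam : ι → ℝ}

lemma norm_fderiv_norm_sq_le {f : E → F} {x : E} (hf : DifferentiableAt ℝ f x) :
    ‖fderiv ℝ (fun x => ‖f x‖ ^ 2) x‖ ≤ 2 * (‖f x‖ * ‖fderiv ℝ f x‖) := by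
  rw [hf.hasFDerivAt.norm_sq.fderiv]
  refine norm_nsmul_le.trans ?_
  rw [Nat.cast_ofNat, ← innerSL_apply_norm ℝ (f x)]
  gcongr
  exact ContinuousLinearMap.opNorm_comp_le _ _

lemma norm_fderiv_sum_mul_norm_sq_sq_le {x : E} (hu : ∀ n, DifferentiableAt ℝ (u n) x)
    (hlam : ∀ n, 0 ≤ lam n) :
    ‖fderiv ℝ (fun x => ∑ n, lam n * ‖u n x‖ ^ 2) x‖ ^ 2 ≤
      4 * (∑ n, lam n * ‖u n x‖ ^ 2) * ∑ n, lam n * ‖fderiv ℝ (u n) x‖ ^ 2 := by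
  have hsq (n : ι) : DifferentiableAt ℝ (fun x => ‖u n x‖ ^ 2) x := (hu n).norm_sq ℝ
  have hnorm : ‖fderiv ℝ (fun x => ∑ n, lam n * ‖u n x‖ ^ 2) x‖ ≤
      2 * ∑ n, (√(lam n) * ‖u n x‖) * (√(lam n) * ‖fderiv ℝ (u n) x‖) := by
    rw [fderiv_fun_sum fun n _ => (hsq n).const_mul (lam n), Finset.mul_sum]
    refine norm_sum_le_of_le _ fun n _ => ?_
    rw [fderiv_const_mul (hsq n), norm_smul, Real.norm_of_nonneg (hlam n), mul_mul_mul_comm,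
      Real.mul_self_sqrt (hlam n), mul_left_comm]
    exact mul_le_mul_of_nonneg_left (norm_fderiv_norm_sq_le (hu n)) (hlam n)
  calc ‖fderiv ℝ (fun x => ∑ n, lam n * ‖u n x‖ ^ 2) x‖ ^ 2
      ≤ 4 * (∑ n, (√(lam n) * ‖u n x‖) * (√(lam n) * ‖fderiv ℝ (u n) x‖)) ^ 2 := by
        refine (pow_le_pow_left₀ (norm_nonneg _) hnorm 2).trans_eq ?_
        ring
    _ ≤ 4 * ((∑ n, lam n * ‖u n x‖ ^ 2) * ∑ n, lam n * ‖fderiv ℝ (u n) x‖ ^ 2) := by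
        gcongr
        simpa only [mul_pow, Real.sq_sqrt (hlam _)] using Finset.sum_mul_sq_le_sq_mul_sq _
          (fun n => √(lam n) * ‖u n x‖) fun n => √(lam n) * ‖fderiv ℝ (u n) x‖
    _ = _ := by ring

end Density

section LiebThirring

open Metric Module Bornology

variable {E : Type*} [NormedAddCommGroup E] [NormedSpace ℝ E] [FiniteDimensional ℝ E]
  [Nontrivial E] [MeasurableSpace E] [BorelSpace E] {μ : Measure E} [μ.IsAddHaarMeasure]
  {S : Set E} {ι : Type*} [Fintype ι] [DecidableEq ι] {u : ι → E → ℂ} {lam : ι → ℝ}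

theorem setIntegral_density_rpow_le (hS : Convex ℝ S) (hSb : IsBounded S)
    (hu : ∀ n, ContDiff ℝ 1 (u n))
    (ho : ∀ m n, ∫ x in S, u m x * starRingEnd ℂ (u n x) ∂μ = if m = n then 1 else 0)
    (hlam : ∀ n, 0 ≤ lam n ∧ lam n ≤ 1) {m : ℝ} (hm : 1 < m)
    (hρ : ∫ x in S, ∑ n, lam n * ‖u n x‖ ^ 2 ∂μ = m) :
    ∫ x in S, (∑ n, lam n * ‖u n x‖ ^ 2) ^ (1 + 2 / (finrank ℝ E : ℝ)) ∂μ ≤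
      2 ^ finrank ℝ E * (m / (m - 1) + 64 * smoothTransitionSlope ^ 2) *
        ((4 * 2 ^ finrank ℝ E * m / μ.real S) ^ (2 / (finrank ℝ E : ℝ)) * diam S ^ 2) *
          ∑ n, lam n * ∫ x in S, ‖fderiv ℝ (u n) x‖ ^ 2 ∂μ := by
  have hm₀ : 0 < ∫ x in S, ∑ n, lam n * ‖u n x‖ ^ 2 ∂μ := hρ ▸ zero_lt_one.trans hm
  have hV : 0 < μ.real S := measureReal_pos_of_setIntegral_pos hSb.measure_lt_top.ne hm₀
  have huc (n : ι) : Continuous (u n) := (hu n).continuous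
  have hu' (n : ι) : Continuous (fderiv ℝ (u n)) := (hu n).continuous_fderiv one_ne_zero
  have hmass : ∑ n, lam n = m := by
    rw [← hρ, setIntegral_sum_mul_norm_sq huc hSb]
    simp only [integral_norm_sq_eq_one_of_orthonormal ho, mul_one]
  have hGN := setIntegral_rpow_one_add_two_div_finrank_le hS hSb
    (ρ := fun x => ∑ n, lam n * ‖u n x‖ ^ 2) (τ := fun x => ∑ n, lam n * ‖fderiv ℝ (u n) x‖ ^ 2)
    (ContDiff.sum fun n _ => contDiff_const.mul ((hu n).norm_sq ℝ))
    (fun x => Finset.sum_nonneg fun n _ => mul_nonneg (hlam n).1 (sq_nonneg _))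
    hm₀ (by fun_prop)
    (fun x => Finset.sum_nonneg fun n _ => mul_nonneg (hlam n).1 (sq_nonneg _))
    fun x => norm_fderiv_sum_mul_norm_sq_sq_le
      (fun n => (hu n).differentiable one_ne_zero x) fun n => (hlam n).1
  have hgap := two_mul_sum_sub_one_le_sum_integral_norm_fderiv_sq hS hSb hV hu ho hlam
  rw [hρ, setIntegral_sum_mul_norm_sq hu' hSb] at hGN
  rw [hmass] at hgap
  set T := ∑ n, lam n * ∫ x in S, ‖fderiv ℝ (u n) x‖ ^ 2 ∂μ
  have hmT : m ≤ m / (m - 1) * (diam S ^ 2 * 2 ^ finrank ℝ E * T) := by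
    have hm₁ : 0 < m - 1 := sub_pos.2 hm
    rw [div_mul_eq_mul_div, le_div_iff₀ hm₁]
    exact mul_le_mul_of_nonneg_left (by linarith) (by linarith)
  have hV₀ : 0 ≤ (4 * 2 ^ finrank ℝ E * m / μ.real S) ^ (2 / (finrank ℝ E : ℝ)) := by positivity
  refine hGN.trans ((mul_le_mul_of_nonneg_left (add_le_add_left hmT _) hV₀).trans_eq ?_)
  ring

end LiebThirring

section Ball

open Metric Bornology Module

lemma opNorm_sq_le_sum_norm_apply_orthonormalBasis_sq {𝕜 E F ι : Type*} [RCLike 𝕜]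
    [NormedAddCommGroup E] [InnerProductSpace 𝕜 E] [NormedAddCommGroup F] [NormedSpace 𝕜 F]
    [Fintype ι] (b : OrthonormalBasis ι 𝕜 E) (T : E →L[𝕜] F) :
    ‖T‖ ^ 2 ≤ ∑ i, ‖T (b i)‖ ^ 2 := by
  rw [← Real.sq_sqrt (Finset.sum_nonneg fun i _ => sq_nonneg ‖T (b i)‖)]
  refine pow_le_pow_left₀ (norm_nonneg _)
    (T.opNorm_le_bound (Real.sqrt_nonneg _) fun v => ?_) 2
  calc ‖T v‖ = ‖∑ i, b.repr v i • T (b i)‖ := by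
        rw [← congrArg T (b.sum_repr v), map_sum]
        simp only [map_smul]
    _ ≤ ∑ i, ‖T (b i)‖ * ‖b.repr v i‖ :=
        norm_sum_le_of_le _ fun i _ => by rw [norm_smul, mul_comm]
    _ ≤ √(∑ i, ‖T (b i)‖ ^ 2) * √(∑ i, ‖b.repr v i‖ ^ 2) := Real.sum_mul_le_sqrt_mul_sqrt _ _ _
    _ = √(∑ i, ‖T (b i)‖ ^ 2) * ‖v‖ := by rw [← EuclideanSpace.norm_eq, b.repr.norm_map]

lemma norm_fderiv_sq_le_gradSq {d : ℕ} (f : EuclideanSpace ℝ (Fin d) → ℂ)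
    (x : EuclideanSpace ℝ (Fin d)) : ‖fderiv ℝ f x‖ ^ 2 ≤ gradSq f x := by
  simpa only [gradSq, EuclideanSpace.basisFun_apply] using
    opNorm_sq_le_sum_norm_apply_orthonormalBasis_sq (EuclideanSpace.basisFun (Fin d) ℝ)
      (fderiv ℝ f x)

lemma setIntegral_norm_fderiv_sq_le_setIntegral_gradSq {d : ℕ}
    {f : EuclideanSpace ℝ (Fin d) → ℂ} (hf : ContDiff ℝ 1 f)
    {S : Set (EuclideanSpace ℝ (Fin d))} (hS : IsBounded S) :
    ∫ x in S, ‖fderiv ℝ f x‖ ^ 2 ≤ ∫ x in S, gradSq f x := by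
  have : Continuous (fderiv ℝ f) := hf.continuous_fderiv one_ne_zero
  have hgrad : Continuous (gradSq f) := by
    unfold gradSq
    fun_prop
  exact integral_mono (integrableOn_of_continuous_of_isBounded (by fun_prop) hS)
    (integrableOn_of_continuous_of_isBounded hgrad hS) (norm_fderiv_sq_le_gradSq f)

lemma measureReal_ball_pos {X : Type*} [PseudoMetricSpace X] [ProperSpace X] [MeasurableSpace X]
    (μ : Measure X) [μ.IsOpenPosMeasure] [IsFiniteMeasureOnCompacts μ] {c : X} {r : ℝ}
    (hr : 0 < r) : 0 < μ.real (ball c r) :=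
  ENNReal.toReal_pos (measure_ball_pos μ c hr).ne' measure_ball_lt_top.ne

lemma diam_ball_pow_finrank_le {E : Type*} [NormedAddCommGroup E] [NormedSpace ℝ E]
    [FiniteDimensional ℝ E] [MeasurableSpace E] [BorelSpace E] (μ : Measure E)
    [μ.IsAddHaarMeasure] (c : E) {r : ℝ} (hr : 0 < r) :
    diam (ball c r) ^ finrank ℝ E ≤
      2 ^ finrank ℝ E / μ.real (ball 0 1) * μ.real (ball c r) := by
  have hunit : 0 < μ.real (ball (0 : E) 1) :=
    measureReal_ball_pos μ zero_lt_one
  have hscale : μ.real (ball c r) = r ^ finrank ℝ E * μ.real (ball 0 1) := by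
    rw [measureReal_def, Measure.addHaar_ball_of_pos μ c hr, ENNReal.toReal_mul,
      ENNReal.toReal_ofReal (by positivity), measureReal_def]
  calc diam (ball c r) ^ finrank ℝ E ≤ (2 * r) ^ finrank ℝ E := by
        gcongr
        exact diam_ball hr.le
    _ = _ := by
        rw [hscale, mul_pow]
        field_simp

lemma div_rpow_two_div_mul_sq_le {d : ℕ} (hd : d ≠ 0) {D K M V : ℝ} (hD : 0 ≤ D) (hM : 0 ≤ M)
    (hV : 0 < V) (hDV : D ^ d ≤ K * V) :
    (M / V) ^ (2 / (d : ℝ)) * D ^ 2 ≤ (M * K) ^ (2 / (d : ℝ)) := by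
  have hsq : D ^ 2 = (D ^ d) ^ (2 / (d : ℝ)) := by
    rw [← Real.rpow_natCast_mul hD, mul_div_cancel₀ _ (Nat.cast_ne_zero.2 hd), Real.rpow_two]
  rw [hsq, ← Real.mul_rpow (by positivity) (by positivity)]
  refine Real.rpow_le_rpow (by positivity) ?_ (by positivity)
  rw [div_mul_eq_mul_div, div_le_iff₀ hV, mul_assoc]
  gcongr

end Ball

theorem lieb_thirring_ball_general (d : ℕ) (hd : 1 ≤ d) {K m : ℝ} (hK : 0 < K) (hm : 1 < m) :
    ∃ C : ℝ, 0 < C ∧ ∀ S : Set (EuclideanSpace ℝ (Fin d)), Convex ℝ S → Bornology.IsBounded S →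
      Metric.diam S ^ d ≤ K * volume.real S →
      ∀ (ι : Type*) [Fintype ι] [DecidableEq ι] (u : ι → EuclideanSpace ℝ (Fin d) → ℂ)
        (lam : ι → ℝ), (∀ n, ContDiff ℝ 1 (u n)) →
        (∀ m n, ∫ x in S, u m x * starRingEnd ℂ (u n x) = if m = n then 1 else 0) →
        (∀ n, 0 ≤ lam n ∧ lam n ≤ 1) → ∫ x in S, ∑ n, lam n * ‖u n x‖ ^ 2 = m →
        ∑ n, lam n * ∫ x in S, gradSq (u n) x ≥
          1 / C * ∫ x in S, (∑ n, lam n * ‖u n x‖ ^ 2) ^ (1 + 2 / (d : ℝ)) := by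
  have hd₀ : d ≠ 0 := Nat.one_le_iff_ne_zero.1 hd
  have : Nonempty (Fin d) := Fin.pos_iff_nonempty.1 hd
  have : 0 < m - 1 := sub_pos.2 hm
  refine ⟨2 ^ d * (m / (m - 1) + 64 * smoothTransitionSlope ^ 2) *
    (4 * 2 ^ d * m * K) ^ (2 / (d : ℝ)), by positivity, ?_⟩
  intro S hS hSb hdiam ι _ _ u lam hu ho hlam hρ
  have hV : 0 < volume.real S := measureReal_pos_of_setIntegral_pos hSb.measure_lt_top.ne
    (hρ ▸ zero_lt_one.trans hm)
  rw [ge_iff_le, one_div, inv_mul_le_iff₀ (by positivity)]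
  have hdensity := setIntegral_density_rpow_le hS hSb hu ho hlam hm hρ
  rw [finrank_euclideanSpace_fin] at hdensity
  refine hdensity.trans ?_
  gcongr ?_ * ?_
  · exact Finset.sum_nonneg fun n _ => mul_nonneg (hlam n).1 (by positivity)
  · exact mul_le_mul_of_nonneg_left
      (div_rpow_two_div_mul_sq_le hd₀ Metric.diam_nonneg (by positivity) hV hdiam) (by positivity)
  · exact Finset.sum_le_sum fun n _ => mul_le_mul_of_nonneg_left
      (setIntegral_norm_fderiv_sq_le_setIntegral_gradSq (hu n) hSb) (hlam n).1

/-- **Lieb–Thirring inequality on balls**: for a finite family of `C¹` functions,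
orthonormal in `L²(B)` on an open ball `B`, with coefficients `λₙ ∈ [0,1]` and
`∫_B ρ = 2`, the local kinetic energy dominates `(1/C_d) ∫_B ρ^{1+2/d}`. -/
theorem lieb_thirring_ball (d : ℕ) (hd : 1 ≤ d) :
    ∃ C : ℝ, 0 < C ∧
      ∀ (c : EuclideanSpace ℝ (Fin d)) (r : ℝ), 0 < r →
      ∀ (N : ℕ) (u : Fin N → EuclideanSpace ℝ (Fin d) → ℂ) (lam : Fin N → ℝ),
        (∀ n, ContDiff ℝ 1 (u n)) →
        (∀ m n : Fin N,
          ∫ x in Metric.ball c r, u m x * (starRingEnd ℂ) (u n x)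
            = if m = n then 1 else 0) →
        (∀ n, 0 ≤ lam n ∧ lam n ≤ 1) →
        (∫ x in Metric.ball c r, ∑ n, lam n * ‖u n x‖ ^ 2) = 2 →
        ∑ n, lam n * ∫ x in Metric.ball c r, gradSq (u n) x
          ≥ (1 / C) *
            ∫ x in Metric.ball c r, (∑ n, lam n * ‖u n x‖ ^ 2) ^ (1 + 2 / (d : ℝ)) := by
  have hunit : 0 < volume.real (Metric.ball (0 : EuclideanSpace ℝ (Fin d)) 1) :=
    measureReal_ball_pos volume zero_lt_one
  obtain ⟨C, hC, h⟩ := lieb_thirring_ball_general d hd (div_pos (pow_pos two_pos d) hunit)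
    one_lt_two
  refine ⟨C, hC, fun c r hr N => h _ (convex_ball c r) Metric.isBounded_ball ?_ (Fin N)⟩
  simpa only [finrank_euclideanSpace_fin] using diam_ball_pow_finrank_le volume c hr
end

section
/- (Hoffmann-Ostenhof inequality) Let u_1, …, u_N be continuously differentiable functions from ℝ^d to ℂ, let λ_1, …, λ_N ≥ 0, and set ρ(x) = Σ_{n=1}^N λ_n |u_n(x)|². Then for every measurable set B ⊂ ℝ^d, one has Σ_{n=1}^N λ_n ∫_B |∇u_n(x)|² dx ≥ ∫_{B ∩ {ρ > 0}} |∇ρ(x)|² / (4 ρ(x)) dx, where the right-hand side equals ∫_B |∇√ρ|² since |∇√ρ|² = |∇ρ|²/(4ρ) on the set where ρ > 0. -/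
open MeasureTheory ENNReal
open scoped BigOperators

/-- `|∇g(x)|² = Σᵢ (∂ᵢ g(x))²` for a real-valued function `g : ℝ^d → ℝ`. -/
noncomputable def gradSqR {d : ℕ} (g : EuclideanSpace ℝ (Fin d) → ℝ)
    (x : EuclideanSpace ℝ (Fin d)) : ℝ :=
  ∑ i : Fin d, (fderiv ℝ g x (EuclideanSpace.single i 1)) ^ 2

/-!
The weighted family `f = (√λₙ uₙ)ₙ` is a single map into a Hilbert space, with `‖f‖² = ρ` and
`|∇f|² = ∑ₙ λₙ |∇uₙ|²`. For any such `f` each partial derivative satisfies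
`∂ᵢ ‖f‖² = 2 ⟪f, ∂ᵢ f⟫`, so Cauchy–Schwarz gives the pointwise bound `|∇ρ|² ≤ 4 ρ |∇f|²`,
which is then integrated.
-/

section SquaredGradient

variable {E F κ : Type*} [Fintype κ] [NormedAddCommGroup E] [NormedSpace ℝ E]
  [NormedAddCommGroup F] [NormedSpace ℝ F]

/-- The squared gradient `∑ᵢ ‖∂_{eᵢ} f(x)‖²` of a vector-valued function along a finite family of
directions `e`. It specializes to both `gradSq` and `gradSqR` when `e` is the standard basis, and
for an orthonormal basis `e` of `E` it is the squared Hilbert–Schmidt norm of the derivative. -/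
noncomputable def gradSqAlong (e : κ → E) (f : E → F) (x : E) : ℝ :=
  ∑ i, ‖fderiv ℝ f x (e i)‖ ^ 2

theorem gradSq_eq_gradSqAlong {d : ℕ} (f : EuclideanSpace ℝ (Fin d) → ℂ) :
    gradSq f = gradSqAlong (fun i => EuclideanSpace.single i 1) f :=
  rfl

theorem gradSqR_eq_gradSqAlong {d : ℕ} (g : EuclideanSpace ℝ (Fin d) → ℝ) :
    gradSqR g = gradSqAlong (fun i => EuclideanSpace.single i 1) g := by
  ext x
  simp only [gradSqR, gradSqAlong, Real.norm_eq_abs, sq_abs]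

theorem gradSqAlong_nonneg (e : κ → E) (f : E → F) (x : E) : 0 ≤ gradSqAlong e f x :=
  Finset.sum_nonneg fun _ _ => sq_nonneg _

theorem measurable_gradSqAlong [CompleteSpace F] [MeasurableSpace E] [OpensMeasurableSpace E]
    (e : κ → E) (f : E → F) : Measurable (gradSqAlong e f) := by
  borelize F
  exact Finset.measurable_fun_sum _ fun i _ =>
    (measurable_fderiv_apply_const ℝ f (e i)).norm.pow_const 2

theorem lintegral_ofReal_sum_mul_gradSqAlong {ι : Type*} [Fintype ι] [CompleteSpace F]
    [MeasurableSpace E] [OpensMeasurableSpace E] (μ : Measure E) (e : κ → E) {lam : ι → ℝ}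
    (hlam : ∀ n, 0 ≤ lam n) (u : ι → E → F) :
    ∫⁻ x, ENNReal.ofReal (∑ n, lam n * gradSqAlong e (u n) x) ∂μ
      = ∑ n, ENNReal.ofReal (lam n) * ∫⁻ x, ENNReal.ofReal (gradSqAlong e (u n) x) ∂μ := by
  have hmeas (n : ι) : Measurable fun x => ENNReal.ofReal (gradSqAlong e (u n) x) :=
    (measurable_gradSqAlong e (u n)).ennreal_ofReal
  simp only [ENNReal.ofReal_sum_of_nonneg fun n _ =>
      mul_nonneg (hlam n) (gradSqAlong_nonneg e (u n) _), ENNReal.ofReal_mul (hlam _),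
    lintegral_finsetSum _ fun n _ => (hmeas n).const_mul _, lintegral_const_mul _ (hmeas _)]

end SquaredGradient

section WeightedFamily

variable {X E F κ ι : Type*} [NormedAddCommGroup E] [NormedSpace ℝ E]
  [NormedAddCommGroup F] [NormedSpace ℝ F]

/-- The map `x ↦ (√λₙ uₙ(x))ₙ` into the `ℓ²`-sum of copies of `F`, which turns the density
`∑ₙ λₙ ‖uₙ‖²` into the squared norm of a single function. -/
noncomputable def weightedFamily (lam : ι → ℝ) (u : ι → X → F) (x : X) : PiLp 2 fun _ : ι => F :=
  WithLp.toLp 2 fun n => √(lam n) • u n x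

theorem norm_sqrt_smul_sq {a : ℝ} (ha : 0 ≤ a) (v : F) : ‖√a • v‖ ^ 2 = a * ‖v‖ ^ 2 := by
  rw [norm_smul, mul_pow, Real.norm_eq_abs, sq_abs, Real.sq_sqrt ha]

theorem norm_weightedFamily_sq [Fintype ι] {lam : ι → ℝ} (hlam : ∀ n, 0 ≤ lam n)
    (u : ι → X → F) (x : X) :
    ‖weightedFamily lam u x‖ ^ 2 = ∑ n, lam n * ‖u n x‖ ^ 2 := by
  simp only [weightedFamily, PiLp.norm_sq_eq_of_L2, norm_sqrt_smul_sq (hlam _)]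

variable {u : ι → E → F} {x : E}

theorem differentiableAt_weightedFamily [Finite ι] (lam : ι → ℝ)
    (hu : ∀ n, DifferentiableAt ℝ (u n) x) : DifferentiableAt ℝ (weightedFamily lam u) x :=
  (differentiableAt_piLp 2).2 fun n => (hu n).const_smul √(lam n)

theorem fderiv_weightedFamily_apply [Finite ι] (lam : ι → ℝ)
    (hu : ∀ n, DifferentiableAt ℝ (u n) x) (v : E) (n : ι) :
    fderiv ℝ (weightedFamily lam u) x v n = √(lam n) • fderiv ℝ (u n) x v := by
  have hcoord : HasFDerivAt (fun y => √(lam n) • u n y)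
      (PiLp.proj 2 _ n ∘L fderiv ℝ (weightedFamily lam u) x) x :=
    ((hasFDerivWithinAt_piLp 2).1
      (differentiableAt_weightedFamily lam hu).hasFDerivAt.hasFDerivWithinAt n).hasFDerivAt_of_univ
  exact DFunLike.congr_fun (hcoord.unique ((hu n).hasFDerivAt.const_smul √(lam n))) v

theorem gradSqAlong_weightedFamily [Fintype κ] [Fintype ι] (e : κ → E) {lam : ι → ℝ}
    (hlam : ∀ n, 0 ≤ lam n) (hu : ∀ n, DifferentiableAt ℝ (u n) x) :
    gradSqAlong e (weightedFamily lam u) x = ∑ n, lam n * gradSqAlong e (u n) x := by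
  simp only [gradSqAlong, PiLp.norm_sq_eq_of_L2, fderiv_weightedFamily_apply lam hu,
    norm_sqrt_smul_sq (hlam _), Finset.mul_sum]
  exact Finset.sum_comm

end WeightedFamily

section PointwiseBound

variable {E F κ : Type*} [Fintype κ] [NormedAddCommGroup E] [NormedSpace ℝ E]
  [NormedAddCommGroup F] [InnerProductSpace ℝ F]

theorem gradSqAlong_norm_sq_le (e : κ → E) {f : E → F} {x : E} (hf : DifferentiableAt ℝ f x) :
    gradSqAlong e (fun y => ‖f y‖ ^ 2) x ≤ gradSqAlong e f x * (4 * ‖f x‖ ^ 2) := by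
  have hderiv (v : E) : fderiv ℝ (fun y => ‖f y‖ ^ 2) x v = 2 * inner ℝ (f x) (fderiv ℝ f x v) := by
    simp [hf.hasFDerivAt.norm_sq.fderiv]
  rw [gradSqAlong, gradSqAlong, Finset.sum_mul]
  refine Finset.sum_le_sum fun i _ => ?_
  calc ‖fderiv ℝ (fun y => ‖f y‖ ^ 2) x (e i)‖ ^ 2
      = 4 * |inner ℝ (f x) (fderiv ℝ f x (e i))| ^ 2 := by
        rw [hderiv, Real.norm_eq_abs, abs_mul, abs_two]
        ring
    _ ≤ 4 * (‖f x‖ * ‖fderiv ℝ f x (e i)‖) ^ 2 := by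
        gcongr
        exact abs_real_inner_le_norm _ _
    _ = ‖fderiv ℝ f x (e i)‖ ^ 2 * (4 * ‖f x‖ ^ 2) := by ring

theorem gradSqAlong_sum_mul_norm_sq_le {ι : Type*} [Fintype ι] (e : κ → E) {lam : ι → ℝ}
    {u : ι → E → F} {x : E} (hlam : ∀ n, 0 ≤ lam n) (hu : ∀ n, DifferentiableAt ℝ (u n) x) :
    gradSqAlong e (fun y => ∑ n, lam n * ‖u n y‖ ^ 2) x
      ≤ (∑ n, lam n * gradSqAlong e (u n) x) * (4 * ∑ n, lam n * ‖u n x‖ ^ 2) := by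
  simpa only [norm_weightedFamily_sq hlam, gradSqAlong_weightedFamily e hlam hu] using
    gradSqAlong_norm_sq_le e (differentiableAt_weightedFamily lam hu)

end PointwiseBound

theorem hoffmann_ostenhof_general {E F κ ι : Type*} [Fintype κ] [Fintype ι]
    [NormedAddCommGroup E] [NormedSpace ℝ E] [MeasurableSpace E] [OpensMeasurableSpace E]
    [NormedAddCommGroup F] [InnerProductSpace ℝ F] [CompleteSpace F]
    (μ : Measure E) (e : κ → E) {u : ι → E → F} {lam : ι → ℝ} (B : Set E)
    (hu : ∀ n, ∀ᵐ x ∂μ.restrict B, DifferentiableAt ℝ (u n) x) (hlam : ∀ n, 0 ≤ lam n) :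
    ∫⁻ x in B ∩ {x | 0 < ∑ n, lam n * ‖u n x‖ ^ 2},
        ENNReal.ofReal
          (gradSqAlong e (fun y => ∑ n, lam n * ‖u n y‖ ^ 2) x /
            (4 * ∑ n, lam n * ‖u n x‖ ^ 2)) ∂μ
      ≤ ∑ n, ENNReal.ofReal (lam n) * ∫⁻ x in B, ENNReal.ofReal (gradSqAlong e (u n) x) ∂μ := by
  calc
    _ ≤ ∫⁻ x in B, ENNReal.ofReal
          (gradSqAlong e (fun y => ∑ n, lam n * ‖u n y‖ ^ 2) x /
            (4 * ∑ n, lam n * ‖u n x‖ ^ 2)) ∂μ :=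
        lintegral_mono_set Set.inter_subset_left
    _ ≤ ∫⁻ x in B, ENNReal.ofReal (∑ n, lam n * gradSqAlong e (u n) x) ∂μ := by
        refine lintegral_mono_ae ?_
        filter_upwards [ae_all_iff.2 hu] with x hx
        have hdensity : 0 ≤ ∑ n, lam n * ‖u n x‖ ^ 2 :=
          Finset.sum_nonneg fun n _ => mul_nonneg (hlam n) (sq_nonneg _)
        have henergy : 0 ≤ ∑ n, lam n * gradSqAlong e (u n) x :=
          Finset.sum_nonneg fun n _ => mul_nonneg (hlam n) (gradSqAlong_nonneg e (u n) x)
        -- Where the density vanishes, `a / 0 = 0` makes the bound hold as well.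
        exact ENNReal.ofReal_le_ofReal (div_le_of_le_mul₀ (mul_nonneg zero_le_four hdensity)
          henergy (gradSqAlong_sum_mul_norm_sq_le e hlam hx))
    _ = _ := lintegral_ofReal_sum_mul_gradSqAlong _ e hlam u

/-- **Hoffmann-Ostenhof inequality**: with `ρ = Σₙ λₙ |uₙ|²`, the kinetic energy on any
measurable set `B` dominates `∫_{B ∩ {ρ>0}} |∇ρ|²/(4ρ)`, i.e. `∫_B |∇√ρ|²`.
Both sides are interpreted in `[0,∞]`. -/
theorem hoffmann_ostenhof (d : ℕ) (hd : 1 ≤ d)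
    (N : ℕ) (u : Fin N → EuclideanSpace ℝ (Fin d) → ℂ) (lam : Fin N → ℝ)
    (hu : ∀ n, ContDiff ℝ 1 (u n)) (hlam : ∀ n, 0 ≤ lam n)
    (B : Set (EuclideanSpace ℝ (Fin d))) (hB : MeasurableSet B) :
    ∫⁻ x in B ∩ {x | 0 < ∑ n, lam n * ‖u n x‖ ^ 2},
        ENNReal.ofReal
          (gradSqR (fun y => ∑ n, lam n * ‖u n y‖ ^ 2) x /
            (4 * ∑ n, lam n * ‖u n x‖ ^ 2))
      ≤ ∑ n, ENNReal.ofReal (lam n) * ∫⁻ x in B, ENNReal.ofReal (gradSq (u n) x) := by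
  simpa only [gradSqR_eq_gradSqAlong, gradSq_eq_gradSqAlong] using hoffmann_ostenhof_general
    volume _ B (fun n => ae_of_all _ ((hu n).differentiable one_ne_zero)) hlam
end

section
/- (Convexity of the gradient, two functions) Let v_1, v_2 : ℝ^d → ℂ be differentiable at a point x ∈ ℝ^d with |v_1(x)|² + |v_2(x)|² > 0, and let f(y) = √(|v_1(y)|² + |v_2(y)|²). Then f is differentiable at x and |∇v_1(x)|² + |∇v_2(x)|² ≥ |∇f(x)|². -/
/-!
The function `f` is the norm of the vector-valued map `V = (v₁, v₂)` into the Euclidean product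
`ℂ × ℂ`. The norm of an inner product space is differentiable away from the origin, hence so is `f`
at `x`; and the norm is 1-Lipschitz, so by the chain rule `|∂ₑ f| ≤ ‖∂ₑ V‖` in every direction `e`.
Squaring and summing over the coordinate directions gives the inequality.
-/

open scoped BigOperators

section LipschitzComp

variable {𝕜 E F G : Type*} [NontriviallyNormedField 𝕜] [NormedAddCommGroup E] [NormedSpace 𝕜 E]
  [NormedAddCommGroup F] [NormedSpace 𝕜 F] [NormedAddCommGroup G] [NormedSpace 𝕜 G]

theorem norm_fderiv_comp_apply_le_of_lipschitzWith {g : F → G} {V : E → F} {x : E} {K : NNReal}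
    (hK : LipschitzWith K g) (hg : DifferentiableAt 𝕜 g (V x)) (hV : DifferentiableAt 𝕜 V x)
    (e : E) : ‖fderiv 𝕜 (fun y => g (V y)) x e‖ ≤ K * ‖fderiv 𝕜 V x e‖ := by
  rw [fderiv_fun_comp x hg hV, ContinuousLinearMap.comp_apply]
  exact ContinuousLinearMap.le_of_opNorm_le _ (norm_fderiv_le_of_lipschitz 𝕜 hK) _

end LipschitzComp

theorem norm_sq_fderiv_piLp_apply {𝕜 ι E : Type*} {F : ι → Type*} [NontriviallyNormedField 𝕜]
    [Fintype ι] [NormedAddCommGroup E] [NormedSpace 𝕜 E] [∀ i, NormedAddCommGroup (F i)]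
    [∀ i, NormedSpace 𝕜 (F i)] {V : E → PiLp 2 F} {x : E} (hV : DifferentiableAt 𝕜 V x) (e : E) :
    ‖fderiv 𝕜 V x e‖ ^ 2 = ∑ i, ‖fderiv 𝕜 (fun y => V y i) x e‖ ^ 2 := by
  have hasFDerivAt_coord (i : ι) :
      HasFDerivAt (fun y => V y i) (PiLp.proj 2 F i ∘L fderiv 𝕜 V x) x :=
    (PiLp.hasFDerivAt_apply (𝕜 := 𝕜) 2 (V x) i).comp x hV.hasFDerivAt
  simp only [PiLp.norm_sq_eq_of_L2, (hasFDerivAt_coord _).fderiv,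
    ContinuousLinearMap.comp_apply, PiLp.proj_apply]

section InnerProductSpace

variable {E : Type*} [NormedAddCommGroup E] [NormedSpace ℝ E]

theorem abs_fderiv_norm_apply_le {F : Type*} [NormedAddCommGroup F] [InnerProductSpace ℝ F]
    {V : E → F} {x : E} (hV : DifferentiableAt ℝ V x) (hx : V x ≠ 0) (e : E) :
    |fderiv ℝ (fun y => ‖V y‖) x e| ≤ ‖fderiv ℝ V x e‖ := by
  have norm_differentiableAt : DifferentiableAt ℝ (‖·‖) (V x) := differentiableAt_id.norm ℝ hx
  simpa using
    norm_fderiv_comp_apply_le_of_lipschitzWith lipschitzWith_one_norm norm_differentiableAt hV e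

theorem gradient_convexity_two_general {ι : Type*} {F : ι → Type*} [Fintype ι]
    [∀ i, NormedAddCommGroup (F i)] [∀ i, InnerProductSpace ℝ (F i)] {v : ∀ i, E → F i} {x : E}
    (hv : ∀ i, DifferentiableAt ℝ (v i) x) (hpos : 0 < ∑ i, ‖v i x‖ ^ 2) :
    DifferentiableAt ℝ (fun y => √(∑ i, ‖v i y‖ ^ 2)) x ∧
      ∀ e, fderiv ℝ (fun y => √(∑ i, ‖v i y‖ ^ 2)) x e ^ 2 ≤ ∑ i, ‖fderiv ℝ (v i) x e‖ ^ 2 := by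
  let V : E → PiLp 2 F := fun y => WithLp.toLp 2 fun i => v i y
  have norm_V : (fun y => √(∑ i, ‖v i y‖ ^ 2)) = fun y => ‖V y‖ :=
    funext fun y => (PiLp.norm_eq_of_L2 (V y)).symm
  have V_differentiableAt : DifferentiableAt ℝ V x := (differentiableAt_piLp 2).2 hv
  have V_ne_zero : V x ≠ 0 := by
    rwa [← norm_pos_iff, PiLp.norm_eq_of_L2, Real.sqrt_pos]
  rw [norm_V]
  refine ⟨V_differentiableAt.norm ℝ V_ne_zero, fun e => ?_⟩
  calc fderiv ℝ (fun y => ‖V y‖) x e ^ 2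
    _ ≤ ‖fderiv ℝ V x e‖ ^ 2 :=
      sq_le_sq.2 <| (abs_fderiv_norm_apply_le V_differentiableAt V_ne_zero e).trans (le_abs_self _)
    _ = ∑ i, ‖fderiv ℝ (v i) x e‖ ^ 2 := norm_sq_fderiv_piLp_apply V_differentiableAt e

end InnerProductSpace

/-- **Convexity of the gradient (two functions)**: if `v₁, v₂` are differentiable at `x`
and `|v₁(x)|² + |v₂(x)|² > 0`, then `f = √(|v₁|² + |v₂|²)` is differentiable at `x` and
`|∇v₁(x)|² + |∇v₂(x)|² ≥ |∇f(x)|²`. -/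
theorem gradient_convexity_two (d : ℕ) (hd : 1 ≤ d)
    (v₁ v₂ : EuclideanSpace ℝ (Fin d) → ℂ) (x : EuclideanSpace ℝ (Fin d))
    (h₁ : DifferentiableAt ℝ v₁ x) (h₂ : DifferentiableAt ℝ v₂ x)
    (hpos : 0 < ‖v₁ x‖ ^ 2 + ‖v₂ x‖ ^ 2) :
    DifferentiableAt ℝ (fun y => Real.sqrt (‖v₁ y‖ ^ 2 + ‖v₂ y‖ ^ 2)) x ∧
      gradSqR (fun y => Real.sqrt (‖v₁ y‖ ^ 2 + ‖v₂ y‖ ^ 2)) x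
        ≤ gradSq v₁ x + gradSq v₂ x := by
  have convexity := gradient_convexity_two_general (v := ![v₁, v₂]) (x := x)
    (Fin.forall_fin_two.2 ⟨h₁, h₂⟩) (by simpa using hpos)
  simp only [Fin.sum_univ_two, Matrix.cons_val_zero, Matrix.cons_val_one] at convexity
  obtain ⟨hf, hle⟩ := convexity
  exact ⟨hf, by simpa only [gradSq, gradSqR, ← Finset.sum_add_distrib] using
    Finset.sum_le_sum fun i _ => hle (EuclideanSpace.single i 1)⟩
end
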